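/- arXiv:2508.02535 — 4 statements merged into one kernel-verified Lean document; each statement's English description precedes it below -/
import Mathlib

section
/- Let L̃_l be a link diagram with an ordered labeling l, and let G̃^d_{L̃} be its associated signed double checkerboard graph. Then the Kauffman bracket polynomial of L̃ admits an expansion over double spanning trees: ⟨L̃⟩ = Σ_{T̂ = T ⊔ T̄} ( Π_{e ∈ T} α̃_T(e)|_K ) · ( Π_{ē ∈ T̄} α̃_{T̄}(ē)|_K ), where the sum is over all double spanning trees T̂ of G^d_L, i.e. the bracket polynomial equals the double spanning tree expansion in which each tree contributes the product of the bracket evaluations of the signed activity letters of its internal edges only. -/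
/-!
An external edge `e` of `T` is an internal edge of the dual tree `Tᶜ`.  Since
`((T ∪ {e}) \ {f})ᶜ = Tᶜ \ {e} ∪ {f}` and complementation exchanges the spanning trees of `G`
and `Gd`, the fundamental cycle of `e` in `G` is its fundamental cocycle in `Gd`
(`cyc_eq_dual_cocyc`).  Hence `e` is externally active for `T` exactly when it is internally active
for `Tᶜ`, so its two letters differ by `ActLetter.negate` (`actLetter_dual`).  The dual edge also
carries the opposite sign, and the two changes cancel in the bracket evaluation
(`letterEval_not_negate`).  The two expansions therefore agree tree by tree.
-/

/-!
Combinatorial framework for link universes, checkerboard graphs, spanning-tree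
activities and Kauffman-bracket evaluations, following
"Kauffman bracket polynomials, perfect matchings and cluster variables".
-/

attribute [local instance] Classical.propDecidable

/-- A multigraph: a type `E` of edges, each edge having an unordered pair of
endpoints in the vertex type `V`.  (Checkerboard graphs of link universes may
have parallel edges, so `SimpleGraph` does not suffice.) -/
structure Multigraph (V : Type) (E : Type) where
  ends : E → Sym2 V

namespace Multigraph

variable {V E : Type} (G : Multigraph V E)

/-- `u` and `v` are joined by a walk using only edges from `T`. -/
def Connects (T : Set E) : V → V → Prop :=
  Relation.ReflTransGen fun a b => ∃ e ∈ T, G.ends e = s(a, b)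

/-- `T` is (the edge set of) a spanning tree of `G`: the corresponding spanning
subgraph is connected and every edge of `T` is a bridge of it. -/
def IsSpanningTree (T : Set E) : Prop :=
  (∀ u v : V, G.Connects T u v) ∧
    ∀ e ∈ T, ∀ u v : V, G.ends e = s(u, v) → ¬ G.Connects (T \ {e}) u v

/-- The fundamental cocycle of an internal edge `e` relative to a spanning tree `T`:
all edges `f` such that `(T \ {e}) ∪ {f}` is again a spanning tree. -/
def cocyc (T : Set E) (e : E) : Set E :=
  {f | G.IsSpanningTree (T \ {e} ∪ {f})}

/-- The fundamental cycle of an external edge `e` relative to a spanning tree `T`: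
all edges `f` such that `(T ∪ {e}) \ {f}` is again a spanning tree (this is the
edge set of the unique cycle of `T ∪ {e}`). -/
def cyc (T : Set E) (e : E) : Set E :=
  {f | G.IsSpanningTree ((T ∪ {e}) \ {f})}

/-- An edge `e ∈ T` is internally active when it is the lowest-ordered edge of its
fundamental cocycle. -/
def InternallyActive (ord : E → ℕ) (T : Set E) (e : E) : Prop :=
  e ∈ T ∧ ∀ f ∈ G.cocyc T e, ord e ≤ ord f

/-- An edge `e ∉ T` is externally active when it is the lowest-ordered edge of its
fundamental cycle. -/
def ExternallyActive (ord : E → ℕ) (T : Set E) (e : E) : Prop :=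
  e ∉ T ∧ ∀ f ∈ G.cyc T e, ord e ≤ ord f

end Multigraph

/-- Tutte activity letters: `L`/`D` for internally active/inactive edges,
`ell`/`d` for externally active/inactive edges. -/
inductive ActLetter : Type
  | L | D | ell | d
  deriving DecidableEq

/-- The effect of a negative sign on an activity letter: the bracket evaluation of a
negatively signed letter equals that of the positively signed "negated" letter. -/
def ActLetter.negate : ActLetter → ActLetter
  | .L => .ell
  | .ell => .L
  | .D => .d
  | .d => .D

/-- Bracket-polynomial evaluation of a positively signed activity letter:
`+L ↦ -A⁻³`, `+D ↦ A`, `+ℓ ↦ -A³`, `+d ↦ A⁻¹` (the variable `A` is the Laurent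
generator `T`). -/
noncomputable def letterEvalPos : ActLetter → LaurentPolynomial ℤ
  | .L => -LaurentPolynomial.T (-3)
  | .D => LaurentPolynomial.T 1
  | .ell => -LaurentPolynomial.T 3
  | .d => LaurentPolynomial.T (-1)

/-- Bracket-polynomial evaluation of a signed activity letter (`true` = sign `+`). -/
noncomputable def letterEval (sign : Bool) (a : ActLetter) : LaurentPolynomial ℤ :=
  if sign then letterEvalPos a else letterEvalPos a.negate

/-- The Tutte activity letter of an edge relative to a spanning tree. -/
noncomputable def Multigraph.actLetter {V E : Type} (G : Multigraph V E) (ord : E → ℕ)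
    (T : Set E) (e : E) : ActLetter :=
  if e ∈ T then (if G.InternallyActive ord T e then .L else .D)
  else (if G.ExternallyActive ord T e then .ell else .d)

/-- Planar duality exchanges fundamental cycles and fundamental cocycles. -/
theorem cyc_eq_dual_cocyc {B W E : Type} (G : Multigraph B E) (Gd : Multigraph W E)
    (hdual : ∀ T : Set E, G.IsSpanningTree T ↔ Gd.IsSpanningTree Tᶜ) (T : Set E) (e : E) :
    G.cyc T e = Gd.cocyc Tᶜ e := by
  ext f
  have h : ((T ∪ {e}) \ {f})ᶜ = Tᶜ \ {e} ∪ {f} := by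
    ext x
    simp only [Set.mem_compl_iff, Set.mem_sdiff, Set.mem_union, Set.mem_singleton_iff]
    tauto
  simp only [Multigraph.cyc, Multigraph.cocyc, Set.mem_ofPred_eq]
  rw [hdual, h]

/-- For an edge outside `T`, passing to the dual tree turns `ell` into `L` and `d` into `D`. -/
theorem actLetter_dual {B W E : Type} (G : Multigraph B E) (Gd : Multigraph W E)
    (hdual : ∀ T : Set E, G.IsSpanningTree T ↔ Gd.IsSpanningTree Tᶜ) (ord : E → ℕ)
    (T : Set E) (e : E) (he : e ∉ T) :
    Gd.actLetter ord Tᶜ e = (G.actLetter ord T e).negate := by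
  have hact : G.ExternallyActive ord T e ↔ Gd.InternallyActive ord Tᶜ e := by
    simp only [Multigraph.ExternallyActive, Multigraph.InternallyActive,
      cyc_eq_dual_cocyc G Gd hdual, Set.mem_compl_iff]
  have he' : e ∈ Tᶜ := he
  unfold Multigraph.actLetter
  rw [if_pos he', if_neg he]
  by_cases h : Gd.InternallyActive ord Tᶜ e
  · rw [if_pos h, if_pos (hact.2 h)]
    rfl
  · rw [if_neg h, if_neg (mt hact.1 h)]
    rfl

theorem letterEval_not_negate (b : Bool) (a : ActLetter) :
    letterEval (!b) a.negate = letterEval b a := by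
  cases b <;> cases a <;> rfl

/-- double spanning tree expansion of the Kauffman bracket.
`G`/`Gd` are the signed checkerboard graph and its dual for a link diagram with
crossings `Fin n`, ordered labeling `ord` and crossing signs `csign`
(`true` = `+`; edge signs are `sign e = csign e` in `G` and `-csign e` in `Gd`);
`hdual` records planar duality (the dual spanning tree of `T` is `Tᶜ`).  The
Kauffman bracket is given by Thistlethwaite's spanning-tree expansion
(hypothesis `hthistle`, summing the bracket evaluations of the signed activity
letters of *all* edges over spanning trees of `G`).  Then the bracket also
equals the double spanning tree expansion in which each double tree `T ⊔ Tᶜ`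
contributes the product of the evaluations of the signed activity letters of
its *internal* edges only. -/
theorem statement1 {B W : Type} {n : ℕ}
    (G : Multigraph B (Fin n)) (Gd : Multigraph W (Fin n))
    (hdual : ∀ T : Set (Fin n), G.IsSpanningTree T ↔ Gd.IsSpanningTree Tᶜ)
    (ord : Fin n → ℕ) (hord : Function.Injective ord)
    (csign : Fin n → Bool)
    (bracket : LaurentPolynomial ℤ)
    (hthistle : bracket =
      ∑ T : Finset (Fin n), if G.IsSpanningTree ↑T then
        ∏ e : Fin n, letterEval (csign e) (G.actLetter ord ↑T e) else 0) :
    bracket =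
      ∑ T : Finset (Fin n), if G.IsSpanningTree ↑T then
        (∏ e ∈ T, letterEval (csign e) (G.actLetter ord ↑T e)) *
          (∏ e ∈ Tᶜ, letterEval (!csign e) (Gd.actLetter ord (↑T : Set (Fin n))ᶜ e)) else 0 := by
  rw [hthistle]
  refine Finset.sum_congr rfl fun T _ => ?_
  split_ifs
  · rw [← Finset.prod_mul_prod_compl T]
    congr 1
    refine Finset.prod_congr rfl fun e he => ?_
    have he' : e ∉ (↑T : Set (Fin n)) := by simpa using he
    rw [actLetter_dual G Gd hdual ord _ e he', letterEval_not_negate]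
  · rfl
end

section
/- Let L be a prime-like link universe and let L' be the link universe obtained from L by a bigon extension at a crossing point c (where L has no nugatory crossings). Then L' is also prime-like. -/
/-!
Let `X` be a cut of `L'` crossed by at most two segments.

If the two new crossings `c1`, `c2` lie on the same side of `X`, then `X` is the preimage of a cut
of `L` crossed by at most two segments, contradicting that `L` is prime-like
(`BigonSegExt.not_sameSide`).

If `c1` and `c2` are separated by `X`, both bigon segments cross `X`, so no old segment does. Then
`X` induces a partition of the crossings of `L` other than `c` that is respected by every segment
not incident to `c`. Both parts are nonempty: an old segment at `c1` does not cross `X` and is not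
a loop in `L`, so its other end is a crossing in `X` other than `c1`, `c2`; likewise for `c2`.
Hence `c` is nugatory (`BigonSegExt.nugatory_of_separates`).
-/

/-!
Statement 8: bigon extensions preserve prime-likeness.
A link universe is modelled by its underlying 4-valent graph: crossings `C`
and segments `Seg`, each segment having two (ordered) crossing endpoints.
-/

attribute [local instance] Classical.propDecidable

/-- The underlying graph of a link universe: crossing points and segments. -/
structure SegGraph where
  C : Type
  Seg : Type
  [fintC : Fintype C]
  [decC : DecidableEq C]
  [fintSeg : Fintype Seg]
  [decSeg : DecidableEq Seg]
  segFrom : Seg → C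
  segTo : Seg → C

attribute [instance] SegGraph.fintC SegGraph.decC SegGraph.fintSeg SegGraph.decSeg

namespace SegGraph

variable (A : SegGraph)

/-- The segment `t` crosses the partition `X | Xᶜ` of the crossings. -/
def CrossesCut (X : Set A.C) (t : A.Seg) : Prop :=
  ¬ ((A.segFrom t ∈ X) ↔ (A.segTo t ∈ X))

/-- The link universe is connected. -/
def Conn : Prop :=
  ∀ a b : A.C, Relation.ReflTransGen
    (fun x y => ∃ t, (A.segFrom t = x ∧ A.segTo t = y) ∨ (A.segFrom t = y ∧ A.segTo t = x)) a b

/-- No curls: no segment is a loop at a crossing. -/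
def NoCurl : Prop := ∀ t, A.segFrom t ≠ A.segTo t

/-- The crossing `c` is nugatory: some simple closed curve through `c` meets `L`
only at `c` and has crossings on both sides; combinatorially, the crossings
other than `c` split into two nonempty parts joined only through segments
incident to `c`. -/
def Nugatory (c : A.C) : Prop :=
  ∃ X : Set A.C, c ∉ X ∧ (∃ x, x ∈ X) ∧ (∃ y, y ∉ X ∧ y ≠ c) ∧
    ∀ t, A.segFrom t ≠ c → A.segTo t ≠ c → ¬ A.CrossesCut X t

/-- `L` is prime-like: there is no simple closed curve meeting `L` in exactly two
points with crossings on both sides; combinatorially, no partition of the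
crossings into two nonempty parts is joined by at most two segments. -/
def PrimeLike : Prop :=
  ¬ ∃ (X : Set A.C) (u v : A.Seg), (∃ x, x ∈ X) ∧ (∃ y, y ∉ X) ∧
      ∀ t, A.CrossesCut X t → t = u ∨ t = v

end SegGraph

/-- A bigon extension at the crossing `c`: `c` is split into two new crossings
`c1`, `c2`, joined by the two new (bigon) segments `t1`, `t2`; all other
crossings and segments persist, the four segment-ends formerly at `c` being
distributed two-and-two between `c1` and `c2`. -/
structure BigonSegExt (A A' : SegGraph) (c : A.C) where
  πC : A'.C → A.C
  c1 : A'.C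
  c2 : A'.C
  c1_ne_c2 : c1 ≠ c2
  πc1 : πC c1 = c
  πc2 : πC c2 = c
  π_surj : Function.Surjective πC
  π_inj : ∀ x y, πC x = πC y → πC x ≠ c → x = y
  fiber_c : ∀ x, πC x = c → x = c1 ∨ x = c2
  ιS : A.Seg → A'.Seg
  ιS_inj : Function.Injective ιS
  t1 : A'.Seg
  t2 : A'.Seg
  t1_ne_t2 : t1 ≠ t2
  t_new : ∀ t, ιS t ≠ t1 ∧ ιS t ≠ t2
  S_cover : ∀ u, u = t1 ∨ u = t2 ∨ ∃ t, ιS t = u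
  bigon_ends1 : (A'.segFrom t1 = c1 ∧ A'.segTo t1 = c2) ∨ (A'.segFrom t1 = c2 ∧ A'.segTo t1 = c1)
  bigon_ends2 : (A'.segFrom t2 = c1 ∧ A'.segTo t2 = c2) ∨ (A'.segFrom t2 = c2 ∧ A'.segTo t2 = c1)
  seg_from_old : ∀ t, πC (A'.segFrom (ιS t)) = A.segFrom t
  seg_to_old : ∀ t, πC (A'.segTo (ιS t)) = A.segTo t
  /-- the four old segment-ends at `c` split two-and-two between `c1` and `c2` -/
  split1 : (Finset.univ.filter fun t : A.Seg => A'.segFrom (ιS t) = c1).card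
      + (Finset.univ.filter fun t : A.Seg => A'.segTo (ιS t) = c1).card = 2
  split2 : (Finset.univ.filter fun t : A.Seg => A'.segFrom (ιS t) = c2).card
      + (Finset.univ.filter fun t : A.Seg => A'.segTo (ιS t) = c2).card = 2

namespace BigonSegExt

variable {A A' : SegGraph} {c : A.C}

/-- Let `d` lie over `c` and let `S`, `T` be sets of old segments that start, respectively end, at
`d`, two in total. If no old segment crosses the cut `X`, some crossing not over `c` lies on the
same side of `X` as `d`, namely the other end of a segment in `S` or `T`: it is not over `c`
because `L` has no curls. -/
theorem exists_other_end {S T : Finset A.Seg} {d : A'.C}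
    (ext : BigonSegExt A A' c) (hnocurl : A.NoCurl) (hd : ext.πC d = c)
    (hS : ∀ t ∈ S, A'.segFrom (ext.ιS t) = d) (hT : ∀ t ∈ T, A'.segTo (ext.ιS t) = d)
    (hcard : S.card + T.card = 2) {X : Set A'.C}
    (hX : ∀ t, ¬ A'.CrossesCut X (ext.ιS t)) :
    ∃ x, ext.πC x ≠ c ∧ (x ∈ X ↔ d ∈ X) := by
  have h : S.Nonempty ∨ T.Nonempty := by
    simp only [← Finset.card_pos]
    omega
  rcases h with ⟨t, ht⟩ | ⟨t, ht⟩
  · have hcut := not_not.mp (hX t)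
    rw [hS t ht] at hcut
    refine ⟨A'.segTo (ext.ιS t), fun h => hnocurl t ?_, hcut.symm⟩
    rw [← ext.seg_from_old, ← ext.seg_to_old, hS t ht, hd, h]
  · have hcut := not_not.mp (hX t)
    rw [hT t ht] at hcut
    refine ⟨A'.segFrom (ext.ιS t), fun h => hnocurl t ?_, hcut⟩
    rw [← ext.seg_from_old, ← ext.seg_to_old, hT t ht, hd, h]

/-- A cut of `L'` that separates `c1` from `c2` and is crossed by no old segment exhibits `c` as a
nugatory crossing. -/
theorem nugatory_of_separates (ext : BigonSegExt A A' c) (hnocurl : A.NoCurl) {X : Set A'.C}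
    (hsep : ¬ (ext.c1 ∈ X ↔ ext.c2 ∈ X)) (hX : ∀ t, ¬ A'.CrossesCut X (ext.ιS t)) :
    A.Nugatory c := by
  obtain ⟨x1, hx1, h1⟩ := ext.exists_other_end hnocurl ext.πc1
    (fun t ht => (Finset.mem_filter.mp ht).2) (fun t ht => (Finset.mem_filter.mp ht).2)
    ext.split1 hX
  obtain ⟨x2, hx2, h2⟩ := ext.exists_other_end hnocurl ext.πc2
    (fun t ht => (Finset.mem_filter.mp ht).2) (fun t ht => (Finset.mem_filter.mp ht).2)
    ext.split2 hX
  -- away from `c`, membership in the induced set is decided by the unique preimage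
  have key : ∀ x, ext.πC x ≠ c →
      (ext.πC x ∈ {y | y ≠ c ∧ ∃ z ∈ X, ext.πC z = y} ↔ x ∈ X) := by
    intro x hx
    refine ⟨?_, fun h => ⟨hx, x, h, rfl⟩⟩
    rintro ⟨-, z, hz, hzx⟩
    exact ext.π_inj x z hzx.symm hx ▸ hz
  refine ⟨{y | y ≠ c ∧ ∃ z ∈ X, ext.πC z = y}, fun h => h.1 rfl, ?_, ?_, ?_⟩
  · by_cases hc : ext.c1 ∈ X
    · exact ⟨_, (key x1 hx1).mpr (h1.mpr hc)⟩
    · exact ⟨_, (key x2 hx2).mpr (h2.mpr (by tauto))⟩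
  · by_cases hc : ext.c1 ∈ X
    · exact ⟨_, fun h => absurd ((key x2 hx2).mp h) (by tauto), hx2⟩
    · exact ⟨_, fun h => absurd ((key x1 hx1).mp h) (by tauto), hx1⟩
  · intro t hf ht hcross
    apply hX t
    rw [← ext.seg_from_old] at hf
    rw [← ext.seg_to_old] at ht
    unfold SegGraph.CrossesCut at hcross ⊢
    rwa [← ext.seg_from_old, ← ext.seg_to_old, key _ hf, key _ ht] at hcross

/-- Every segment `u` of `L'` has a stand-in in `L` that is its preimage whenever one exists. -/
theorem exists_old (ext : BigonSegExt A A' c) (u : A'.Seg) :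
    ∃ s : A.Seg, ∀ t, ext.ιS t = u → t = s := by
  by_cases h : ∃ s, ext.ιS s = u
  · obtain ⟨s, rfl⟩ := h
    exact ⟨s, fun t ht => ext.ιS_inj ht⟩
  · -- `L` has at least one segment, since two segment-ends lie at `c`
    have : Nonempty A.Seg := by
      by_contra hne
      have := not_nonempty_iff.mp hne
      have h2 := ext.split1
      simp at h2
    exact ⟨Classical.arbitrary _, fun t ht => absurd ⟨t, ht⟩ h⟩

/-- If `L` is prime-like, a nontrivial cut of `L'` crossed by at most two segments separates `c1`
from `c2`. -/
theorem not_sameSide (ext : BigonSegExt A A' c) (hprime : A.PrimeLike) {X : Set A'.C}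
    {u v : A'.Seg} (hne : ∃ x, x ∈ X) (hne' : ∃ y, y ∉ X)
    (hX : ∀ t, A'.CrossesCut X t → t = u ∨ t = v) :
    ¬ (ext.c1 ∈ X ↔ ext.c2 ∈ X) := by
  intro hside
  have key : ∀ x, ext.πC x ∈ ext.πC '' X ↔ x ∈ X := by
    intro x
    refine ⟨?_, fun h => ⟨x, h, rfl⟩⟩
    rintro ⟨z, hz, hzx⟩
    by_cases hc : ext.πC x = c
    · rcases ext.fiber_c x hc with rfl | rfl <;>
        rcases ext.fiber_c z (hzx.trans hc) with rfl | rfl <;> tauto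
    · exact ext.π_inj x z hzx.symm hc ▸ hz
  obtain ⟨u', hu⟩ := ext.exists_old u
  obtain ⟨v', hv⟩ := ext.exists_old v
  obtain ⟨x, hx⟩ := hne
  obtain ⟨y, hy⟩ := hne'
  refine hprime ⟨ext.πC '' X, u', v', ⟨_, (key x).mpr hx⟩, ⟨_, mt (key y).mp hy⟩, ?_⟩
  intro t ht
  unfold SegGraph.CrossesCut at ht
  rw [← ext.seg_from_old, ← ext.seg_to_old, key, key] at ht
  exact (hX _ ht).imp (hu t) (hv t)

end BigonSegExt

/-- Let `L` be a connected link universe without curls or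
nugatory crossings, and let `L'` be obtained from `L` by a bigon extension at a
crossing `c`.  If `L` is prime-like then so is `L'`. -/
theorem statement8 (A A' : SegGraph) (c : A.C) (ext : BigonSegExt A A' c)
    (hconn : A.Conn) (hnocurl : A.NoCurl) (hnug : ∀ x, ¬ A.Nugatory x)
    (hprime : A.PrimeLike) : A'.PrimeLike := by
  rintro ⟨X, u, v, hne, hne', hX⟩
  have hsep := ext.not_sameSide hprime hne hne' hX
  refine hnug c (ext.nugatory_of_separates hnocurl hsep fun t ht => ?_)
  have h1 : A'.CrossesCut X ext.t1 := by
    unfold SegGraph.CrossesCut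
    rcases ext.bigon_ends1 with ⟨h, h'⟩ | ⟨h, h'⟩ <;> rw [h, h'] <;> tauto
  have h2 : A'.CrossesCut X ext.t2 := by
    unfold SegGraph.CrossesCut
    rcases ext.bigon_ends2 with ⟨h, h'⟩ | ⟨h, h'⟩ <;> rw [h, h'] <;> tauto
  -- `t1`, `t2` and the old segment would be three distinct segments among `u`, `v`
  have := hX _ h1
  have := hX _ h2
  have := hX _ ht
  have := ext.t1_ne_t2
  have := ext.t_new t
  grind
end

section
/- Let L_l be a link universe with ordered labeling l, and let L'_{l'} be obtained from L_l by a bigon extension E_{c_i} with a natural relabeling l'. Let T̂ be a double spanning tree of G^d_L and T̂' any corresponding double spanning tree of G^d_{L'} (under the canonical 1-to-1 or 1-to-2 correspondence induced by the extension). Then for every edge ê_k ∈ T̂ with k ≠ i, the corresponding edge ê'_{l'(k)} ∈ T̂' has the same activity letter: α_{T̂}(ê_k) = α_{T̂'}(ê'_{l'(k)}). -/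
/-!
A bigon extension doubles the edge of `c` in one of the two checkerboard graphs (the dual graph
for type A, the checkerboard graph for type B) while its vertex set stays the same.  In that graph
the collapse map `π` on edges preserves endpoints, so a set of edges `S` upstairs is a spanning
tree exactly when `π` is injective on `S` and `π '' S` is a spanning tree downstairs
(`isSpanningTree_iff_image`).

By planar duality the fundamental cocycle of an edge of one graph is the fundamental cycle
of the same crossing in the other (`internallyActive_iff_externallyActive`).  Hence every activity
letter can be read off from the graph with doubled edges: edges of the tree give internal
activity, edges of the complement give external activity there.  Fundamental cycles and
cocycles of corresponding trees match under `π`, and the natural relabeling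
compares `x` with `y` as it compares `π x` with `π y` whenever `π x ≠ c`; so both activities
are preserved (`internallyActive_iff_image`, `externallyActive_iff_image`).
-/

/-!
Combinatorial framework for link universes, checkerboard graphs, spanning-tree
activities and Kauffman-bracket evaluations, following
"Kauffman bracket polynomials, perfect matchings and cluster variables".
-/

attribute [local instance] Classical.propDecidable

/-- A link configuration: the combinatorial data of a (connected, checkerboard
colored) link universe `L` together with a distinguished segment `s` and an
ordered labeling of its crossing points.

* `C` is the set of crossing points, `B`/`W` the sets of black/white regions and
  `Seg` the set of segments of `L`.
* `G` is the checkerboard graph (one vertex per black region, one edge per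
  crossing) and `Gd` the dual checkerboard graph.
* each segment is oriented (`segFrom`/`segTo`) so that its black side
  `segBlack` lies to the left; `rot` is the counterclockwise rotation of the
  segments around a crossing.
* `ord` is the ordered labeling of the crossings.
* `dual_trees` records planar duality between `G` and `Gd`: complements of
  spanning trees of `G` are exactly the (dual) spanning trees of `Gd`. -/
structure LinkConfig where
  C : Type
  B : Type
  W : Type
  Seg : Type
  [fintC : Fintype C]
  [decC : DecidableEq C]
  [fintB : Fintype B]
  [decB : DecidableEq B]
  [fintW : Fintype W]
  [decW : DecidableEq W]
  [fintSeg : Fintype Seg]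
  [decSeg : DecidableEq Seg]
  G : Multigraph B C
  Gd : Multigraph W C
  segFrom : Seg → C
  segTo : Seg → C
  segBlack : Seg → B
  segWhite : Seg → W
  rot : C → Seg → Seg
  s : Seg
  ord : C → ℕ
  ord_inj : Function.Injective ord
  dual_trees : ∀ T : Set C, G.IsSpanningTree T ↔ Gd.IsSpanningTree Tᶜ

attribute [instance] LinkConfig.fintC LinkConfig.decC LinkConfig.fintB LinkConfig.decB
  LinkConfig.fintW LinkConfig.decW LinkConfig.fintSeg LinkConfig.decSeg

namespace LinkConfig

variable (U : LinkConfig)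

/-- The black region adjacent to the distinguished segment (an omitted root vertex). -/
def rootB : U.B := U.segBlack U.s

/-- The white region adjacent to the distinguished segment (an omitted root vertex). -/
def rootW : U.W := U.segWhite U.s

/-- Incidence of a crossing with a region. -/
def Incid (c : U.C) : U.B ⊕ U.W → Prop
  | .inl b => b ∈ U.G.ends c
  | .inr w => w ∈ U.Gd.ends c

/-- A region distinct from the two regions adjacent to the distinguished segment. -/
def NonRoot : U.B ⊕ U.W → Prop
  | .inl b => b ≠ U.rootB
  | .inr w => w ≠ U.rootW

/-- A perfect matching of the balanced overlaid checkerboard graph `G^b_{L,s}`,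
recorded as the function sending each crossing to the region its matched
half-edge points to: every crossing is matched to an incident non-root region,
and every non-root region is matched exactly once. -/
def IsPM (m : U.C → U.B ⊕ U.W) : Prop :=
  (∀ c, U.Incid c (m c)) ∧ (∀ c, U.NonRoot (m c)) ∧
    ∀ R : U.B ⊕ U.W, U.NonRoot R → ∃! c, m c = R

/-- The map `η`: the double spanning tree associated to a perfect matching.  A
crossing whose half-edge is matched to a black region contributes its
checkerboard edge (an edge of the spanning-tree part in `G`); the others
contribute dual edges. -/
def treeOf (m : U.C → U.B ⊕ U.W) : Set U.C :=
  {c | ∃ b, m c = Sum.inl b}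

/-- `T` is (the `G`-part of) a double spanning tree `T ⊔ T̄` of the double
checkerboard graph. -/
def IsDoubleTree (T : Set U.C) : Prop :=
  U.G.IsSpanningTree T ∧ U.Gd.IsSpanningTree Tᶜ

/-- The activity letter of the (internal) edge of a double spanning tree at a given
crossing: `L` if it is lowest-ordered in its fundamental cocycle, `D` otherwise. -/
noncomputable def dblLetter (T : Set U.C) (c : U.C) : ActLetter :=
  if c ∈ T then (if U.G.InternallyActive U.ord T c then .L else .D)
  else (if U.Gd.InternallyActive U.ord Tᶜ c then .L else .D)

/-- The activity letter `α_{η(P)}(η(h))` of the full-edge at crossing `c`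
relative to the double spanning tree of the perfect matching `m`. -/
noncomputable def matchLetter (m : U.C → U.B ⊕ U.W) (c : U.C) : ActLetter :=
  U.dblLetter (U.treeOf m) c

/-- The half-edge `h_{(c,R)}` satisfies the evaluation identity (EI-) property:
all perfect matchings containing it assign the same activity letter to the
corresponding full-edge. -/
def EIhalf (c : U.C) (R : U.B ⊕ U.W) : Prop :=
  ∀ m m', U.IsPM m → U.IsPM m' → m c = R → m' c = R →
    U.matchLetter m c = U.matchLetter m' c

/-- The link configuration satisfies the EI-property: every half-edge of the
balanced overlaid checkerboard graph does. -/
def EIconfig : Prop :=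
  ∀ c R, U.Incid c R → U.NonRoot R → U.EIhalf c R

/-- `a` is the (well-defined) activity letter of the half-edge `h_{(c,R)}`:
some perfect matching contains the half-edge, and all perfect matchings
containing it assign it the letter `a`. -/
def LetterIs (c : U.C) (R : U.B ⊕ U.W) (a : ActLetter) : Prop :=
  (∃ m, U.IsPM m ∧ m c = R) ∧ ∀ m, U.IsPM m → m c = R → U.matchLetter m c = a

/-- The Hopf link universe: exactly two crossings, two black and two white regions,
and both checkerboard graphs consist of two parallel (non-loop) edges. -/
def IsHopf : Prop :=
  Fintype.card U.C = 2 ∧ Fintype.card U.B = 2 ∧ Fintype.card U.W = 2 ∧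
    (∀ c, ¬ (U.G.ends c).IsDiag) ∧ (∀ c, ¬ (U.Gd.ends c).IsDiag)

/-- Sign of a region: `+` (true) for black regions, `-` (false) for white ones. -/
def regionSign : U.B ⊕ U.W → Bool
  | .inl _ => true
  | .inr _ => false

/-- Sign of the half-edge `h_{(c,R)}`: the product `sign(c) ⋅ sign(R)`. -/
def halfSign (csign : U.C → Bool) (c : U.C) (R : U.B ⊕ U.W) : Bool :=
  csign c == U.regionSign R

/-- The rule assigning activity letters in an admissible link configuration:
`L` if `c` carries the lowest label among all crossings incident to `R`,
`D` otherwise. -/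
noncomputable def ruleLetter (c : U.C) (R : U.B ⊕ U.W) : ActLetter :=
  if ∀ c', U.Incid c' R → U.ord c ≤ U.ord c' then .L else .D

/-- The segment `t` is incident to the crossing `c`. -/
def SegAt (c : U.C) (t : U.Seg) : Prop :=
  U.segFrom t = c ∨ U.segTo t = c

/-- A transposable segment: one not bounding a region in common with the
distinguished segment. -/
def Transposable (t : U.Seg) : Prop :=
  U.segBlack t ≠ U.rootB ∧ U.segWhite t ≠ U.rootW

/-- The up move at (the movable square face of) the segment `t`, equivalently the
counterclockwise transposition of Kauffman states at `t`: the two matched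
half-edges of the square face are replaced by the two complementary ones. -/
def UpMove (t : U.Seg) (m m' : U.C → U.B ⊕ U.W) : Prop :=
  m (U.segFrom t) = Sum.inl (U.segBlack t) ∧ m (U.segTo t) = Sum.inr (U.segWhite t) ∧
    m' = Function.update (Function.update m (U.segFrom t) (Sum.inr (U.segWhite t)))
      (U.segTo t) (Sum.inl (U.segBlack t))

/-- One up move at some segment. -/
def UpStep (m m' : U.C → U.B ⊕ U.W) : Prop := ∃ t, U.UpMove t m m'

/-- The partial order generated by up moves (counterclockwise transpositions). -/
def Reach : (U.C → U.B ⊕ U.W) → (U.C → U.B ⊕ U.W) → Prop :=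
  Relation.ReflTransGen U.UpStep

/-- An active crossing point: among the half-edges at `v_c` there are exactly two,
forming a corner at `v_c` (i.e. the black and white regions on the two sides of a
segment ending at `c`), each carrying the activity letter `L`. -/
def ActiveCr (c : U.C) : Prop :=
  ∃ t, U.SegAt c t ∧
    U.LetterIs c (Sum.inl (U.segBlack t)) .L ∧
    U.LetterIs c (Sum.inr (U.segWhite t)) .L ∧
    ∀ R, U.Incid c R → U.LetterIs c R .L →
      R = Sum.inl (U.segBlack t) ∨ R = Sum.inr (U.segWhite t)

/-- Combinatorial prime-likeness: there is no partition of the crossings into two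
nonempty parts such that at most two segments join the two parts (such a
partition is exactly what a simple closed curve meeting `L` in two points, with
crossings on both sides, would produce). -/
def PrimeLike : Prop :=
  ¬ ∃ (X : Set U.C) (u v : U.Seg), (∃ c, c ∈ X) ∧ (∃ c, c ∉ X) ∧
      ∀ t : U.Seg, ¬ ((U.segFrom t ∈ X) ↔ (U.segTo t ∈ X)) → t = u ∨ t = v

end LinkConfig

/-- A sequence of counterclockwise transpositions (up moves), performed at the
listed segments, from the first state to the last. -/
inductive LinkConfig.TransSeq (U : LinkConfig) :
    (U.C → U.B ⊕ U.W) → List U.Seg → (U.C → U.B ⊕ U.W) → Prop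
  | nil (m : U.C → U.B ⊕ U.W) : LinkConfig.TransSeq U m [] m
  | cons {m m' m'' : U.C → U.B ⊕ U.W} {t : U.Seg} {l : List U.Seg} :
      U.UpMove t m m' → LinkConfig.TransSeq U m' l m'' → LinkConfig.TransSeq U m (t :: l) m''

/-- A bigon extension of type A at the crossing `c` of `U`, producing `U'`,
together with a natural relabeling of the crossings.  The crossing `c` is split
into the two new crossings `c1` (adjacent to the south black region `rS`) and
`c2` (adjacent to the north black region `rN`), creating a new black bigon
region `newB` bounded by the two new segments `t1`, `t2`; in the checkerboard
graph the edge of `c` is subdivided by `newB`, and in the dual graph the edge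
of `c` is doubled into two parallel edges. -/
structure TypeAExt (U U' : LinkConfig) (c : U.C) where
  /-- collapse map on crossings -/
  πC : U'.C → U.C
  c1 : U'.C
  c2 : U'.C
  c1_ne_c2 : c1 ≠ c2
  πc1 : πC c1 = c
  πc2 : πC c2 = c
  π_surj : Function.Surjective πC
  π_inj : ∀ x y, πC x = πC y → πC x ≠ c → x = y
  fiber_c : ∀ x, πC x = c → x = c1 ∨ x = c2
  /-- inclusion of the old black regions -/
  ιB : U.B → U'.B
  ιB_inj : Function.Injective ιB
  /-- the new (black) bigon region -/
  newB : U'.B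
  newB_not : ∀ b, ιB b ≠ newB
  B_cover : ∀ b', b' = newB ∨ ∃ b, ιB b = b'
  /-- correspondence of the white regions -/
  ιW : U.W → U'.W
  ιW_bij : Function.Bijective ιW
  /-- the two black regions at `c` (north and south of the new bigon) -/
  rN : U.B
  rS : U.B
  /-- the two white regions at `c` (west and east) -/
  rW : U.W
  rE : U.W
  ends_c : U.G.ends c = s(rN, rS)
  endsd_c : U.Gd.ends c = s(rW, rE)
  ends_old : ∀ x, πC x ≠ c → U'.G.ends x = (U.G.ends (πC x)).map ιB
  endsd_old : ∀ x, πC x ≠ c → U'.Gd.ends x = (U.Gd.ends (πC x)).map ιW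
  ends_c1 : U'.G.ends c1 = s(ιB rS, newB)
  ends_c2 : U'.G.ends c2 = s(ιB rN, newB)
  endsd_c1 : U'.Gd.ends c1 = s(ιW rW, ιW rE)
  endsd_c2 : U'.Gd.ends c2 = s(ιW rW, ιW rE)
  /-- inclusion of the old segments -/
  ιS : U.Seg → U'.Seg
  ιS_inj : Function.Injective ιS
  /-- the two new segments bounding the bigon -/
  t1 : U'.Seg
  t2 : U'.Seg
  t1_ne_t2 : t1 ≠ t2
  t_new : ∀ t, ιS t ≠ t1 ∧ ιS t ≠ t2
  S_cover : ∀ u, u = t1 ∨ u = t2 ∨ ∃ t, ιS t = u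
  seg_black1 : U'.segBlack t1 = newB
  seg_black2 : U'.segBlack t2 = newB
  seg_white1 : U'.segWhite t1 = ιW rW
  seg_white2 : U'.segWhite t2 = ιW rE
  seg_ends1 : (U'.segFrom t1 = c1 ∧ U'.segTo t1 = c2) ∨ (U'.segFrom t1 = c2 ∧ U'.segTo t1 = c1)
  seg_ends2 : (U'.segFrom t2 = c1 ∧ U'.segTo t2 = c2) ∨ (U'.segFrom t2 = c2 ∧ U'.segTo t2 = c1)
  seg_from_old : ∀ t, πC (U'.segFrom (ιS t)) = U.segFrom t
  seg_to_old : ∀ t, πC (U'.segTo (ιS t)) = U.segTo t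
  seg_black_old : ∀ t, U'.segBlack (ιS t) = ιB (U.segBlack t)
  seg_white_old : ∀ t, U'.segWhite (ιS t) = ιW (U.segWhite t)
  /-- the distinguished segment is preserved -/
  s_pres : U'.s = ιS U.s
  /-- natural relabeling: old crossings keep their relative order … -/
  ord_old : ∀ x y, πC x ≠ c → πC y ≠ c →
    (U'.ord x < U'.ord y ↔ U.ord (πC x) < U.ord (πC y))
  /-- … and the two new crossings sit exactly at the place of `c`. -/
  ord_new1 : ∀ x, πC x ≠ c → (U'.ord x < U'.ord c1 ↔ U.ord (πC x) < U.ord c)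
  ord_new2 : ∀ x, πC x ≠ c → (U'.ord x < U'.ord c2 ↔ U.ord (πC x) < U.ord c)

/-- A bigon extension of type B at the crossing `c` of `U`, producing `U'`:
the mirror of `TypeAExt`, creating a new white bigon region `newW`; now the
dual edge of `c` is subdivided and the checkerboard edge of `c` is doubled.
`c1` is the new crossing adjacent to the west white region `rW`. -/
structure TypeBExt (U U' : LinkConfig) (c : U.C) where
  πC : U'.C → U.C
  c1 : U'.C
  c2 : U'.C
  c1_ne_c2 : c1 ≠ c2
  πc1 : πC c1 = c
  πc2 : πC c2 = c
  π_surj : Function.Surjective πC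
  π_inj : ∀ x y, πC x = πC y → πC x ≠ c → x = y
  fiber_c : ∀ x, πC x = c → x = c1 ∨ x = c2
  ιW : U.W → U'.W
  ιW_inj : Function.Injective ιW
  newW : U'.W
  newW_not : ∀ w, ιW w ≠ newW
  W_cover : ∀ w', w' = newW ∨ ∃ w, ιW w = w'
  ιB : U.B → U'.B
  ιB_bij : Function.Bijective ιB
  rN : U.B
  rS : U.B
  rW : U.W
  rE : U.W
  ends_c : U.G.ends c = s(rN, rS)
  endsd_c : U.Gd.ends c = s(rW, rE)
  ends_old : ∀ x, πC x ≠ c → U'.G.ends x = (U.G.ends (πC x)).map ιB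
  endsd_old : ∀ x, πC x ≠ c → U'.Gd.ends x = (U.Gd.ends (πC x)).map ιW
  endsd_c1 : U'.Gd.ends c1 = s(ιW rW, newW)
  endsd_c2 : U'.Gd.ends c2 = s(ιW rE, newW)
  ends_c1 : U'.G.ends c1 = s(ιB rN, ιB rS)
  ends_c2 : U'.G.ends c2 = s(ιB rN, ιB rS)
  ιS : U.Seg → U'.Seg
  ιS_inj : Function.Injective ιS
  t1 : U'.Seg
  t2 : U'.Seg
  t1_ne_t2 : t1 ≠ t2
  t_new : ∀ t, ιS t ≠ t1 ∧ ιS t ≠ t2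
  S_cover : ∀ u, u = t1 ∨ u = t2 ∨ ∃ t, ιS t = u
  seg_white1 : U'.segWhite t1 = newW
  seg_white2 : U'.segWhite t2 = newW
  seg_black1 : U'.segBlack t1 = ιB rN
  seg_black2 : U'.segBlack t2 = ιB rS
  seg_ends1 : (U'.segFrom t1 = c1 ∧ U'.segTo t1 = c2) ∨ (U'.segFrom t1 = c2 ∧ U'.segTo t1 = c1)
  seg_ends2 : (U'.segFrom t2 = c1 ∧ U'.segTo t2 = c2) ∨ (U'.segFrom t2 = c2 ∧ U'.segTo t2 = c1)
  seg_from_old : ∀ t, πC (U'.segFrom (ιS t)) = U.segFrom t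
  seg_to_old : ∀ t, πC (U'.segTo (ιS t)) = U.segTo t
  seg_black_old : ∀ t, U'.segBlack (ιS t) = ιB (U.segBlack t)
  seg_white_old : ∀ t, U'.segWhite (ιS t) = ιW (U.segWhite t)
  s_pres : U'.s = ιS U.s
  ord_old : ∀ x y, πC x ≠ c → πC y ≠ c →
    (U'.ord x < U'.ord y ↔ U.ord (πC x) < U.ord (πC y))
  ord_new1 : ∀ x, πC x ≠ c → (U'.ord x < U'.ord c1 ↔ U.ord (πC x) < U.ord c)
  ord_new2 : ∀ x, πC x ≠ c → (U'.ord x < U'.ord c2 ↔ U.ord (πC x) < U.ord c)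

/-- A bigon extension of either type. -/
def BigonExt (U U' : LinkConfig) (c : U.C) : Type :=
  TypeAExt U U' c ⊕ TypeBExt U U' c

namespace BigonExt

variable {U U' : LinkConfig} {c : U.C}

def πC : BigonExt U U' c → U'.C → U.C
  | .inl e => e.πC
  | .inr e => e.πC

def c1 : BigonExt U U' c → U'.C
  | .inl e => e.c1
  | .inr e => e.c1

def c2 : BigonExt U U' c → U'.C
  | .inl e => e.c2
  | .inr e => e.c2

end BigonExt

/-- Admissible link configurations: those obtained from a Hopf link configuration
by a sequence of admissible bigon extensions (i.e. bigon extensions for which a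
natural relabeling of the result satisfies the EI-property). -/
inductive IsAdmissible : LinkConfig → Prop
  | hopf (U : LinkConfig) : U.IsHopf → IsAdmissible U
  | stepA (U U' : LinkConfig) (c : U.C) :
      IsAdmissible U → TypeAExt U U' c → U'.EIconfig → IsAdmissible U'
  | stepB (U U' : LinkConfig) (c : U.C) :
      IsAdmissible U → TypeBExt U U' c → U'.EIconfig → IsAdmissible U'

/-- The canonical correspondence of double spanning trees under a type A bigon
extension: away from `c` membership is preserved; if the checkerboard edge of
`c` is internal (`c ∈ T`) both new (subdivided) edges are internal in `T'`
(the 1-to-1 case), while if the dual edge of `c` is internal (`c ∉ T`) exactly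
one of the two new parallel dual edges is internal (the 1-to-2 case). -/
def TypeAExt.TreeCorr {U U' : LinkConfig} {c : U.C} (ext : TypeAExt U U' c)
    (T : Set U.C) (T' : Set U'.C) : Prop :=
  (∀ x, ext.πC x ≠ c → (x ∈ T' ↔ ext.πC x ∈ T)) ∧
    (c ∈ T → (ext.c1 ∈ T' ∧ ext.c2 ∈ T')) ∧
    (c ∉ T → ((ext.c1 ∈ T') ↔ (ext.c2 ∉ T')))

/-- The canonical correspondence of double spanning trees under a type B bigon
extension (the mirror of the type A case). -/
def TypeBExt.TreeCorr {U U' : LinkConfig} {c : U.C} (ext : TypeBExt U U' c)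
    (T : Set U.C) (T' : Set U'.C) : Prop :=
  (∀ x, ext.πC x ≠ c → (x ∈ T' ↔ ext.πC x ∈ T)) ∧
    (c ∉ T → (ext.c1 ∉ T' ∧ ext.c2 ∉ T')) ∧
    (c ∈ T → ((ext.c1 ∈ T') ↔ (ext.c2 ∉ T')))

/-- Correspondence of double spanning trees under a bigon extension of either type. -/
def BigonExt.TreeCorr {U U' : LinkConfig} {c : U.C} :
    BigonExt U U' c → Set U.C → Set U'.C → Prop
  | .inl e => e.TreeCorr
  | .inr e => e.TreeCorr

namespace Multigraph

section Collapse

variable {V V' E E' : Type} {G : Multigraph V E} {G' : Multigraph V' E'}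
  {π : E' → E} {ι : V → V'}

/-- No spanning tree properly contains another one. -/
lemma IsSpanningTree.not_insert {A : Set E} {k : E} (hA : G.IsSpanningTree A) (hk : k ∉ A) :
    ¬ G.IsSpanningTree (insert k A) := by
  intro h
  obtain ⟨u, v, huv⟩ : ∃ u v, G.ends k = s(u, v) := by
    induction hk' : G.ends k with
    | _ u v => exact ⟨u, v, rfl⟩
  refine h.2 k (Set.mem_insert _ _) u v huv ?_
  rw [Set.insert_sdiff_self_of_notMem hk]
  exact hA.1 u v

lemma connects_iff_image (hι : Function.Bijective ι)
    (hends : ∀ x, G'.ends x = (G.ends (π x)).map ι) (S : Set E') (u v : V) :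
    G'.Connects S (ι u) (ι v) ↔ G.Connects (π '' S) u v := by
  have hstep : ∀ a b x, G'.ends x = s(ι a, ι b) ↔ G.ends (π x) = s(a, b) := fun a b x => by
    rw [hends, ← Sym2.map_mk, (Sym2.map.injective hι.1).eq_iff]
  constructor
  · intro h
    obtain ⟨j, hj1, hj2⟩ := Function.bijective_iff_has_inverse.1 hι
    have := Relation.ReflTransGen.lift (p := fun a b => ∃ e ∈ π '' S, G.ends e = s(a, b)) j
      (by
        rintro a b ⟨e, he, hab⟩
        refine ⟨π e, ⟨e, he, rfl⟩, ?_⟩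
        rw [← hstep, hj2, hj2, hab]) _ _ h
    simpa only [Connects, Function.onFun, hj1 _] using this
  · intro h
    refine Relation.ReflTransGen.lift (p := fun a b => ∃ e ∈ S, G'.ends e = s(a, b)) ι ?_ _ _ h
    rintro a b ⟨_, ⟨e, he, rfl⟩, hab⟩
    exact ⟨e, he, (hstep a b e).2 hab⟩

/-- Collapsing parallel edges: a spanning tree upstairs is a set of edges meeting each class of
identified edges at most once whose image is a spanning tree downstairs. -/
lemma isSpanningTree_iff_image (hι : Function.Bijective ι)
    (hends : ∀ x, G'.ends x = (G.ends (π x)).map ι) (S : Set E') :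
    G'.IsSpanningTree S ↔ Set.InjOn π S ∧ G.IsSpanningTree (π '' S) := by
  have hconn := connects_iff_image (G := G) (G' := G') hι hends
  have hstep : ∀ a b x, G'.ends x = s(ι a, ι b) ↔ G.ends (π x) = s(a, b) := fun a b x => by
    rw [hends, ← Sym2.map_mk, (Sym2.map.injective hι.1).eq_iff]
  have himg : Set.InjOn π S → ∀ e ∈ S, π '' (S \ {e}) = π '' S \ {π e} := fun h e he => by
    rw [h.image_sdiff, Set.inter_eq_right.2 (Set.singleton_subset_iff.2 he),
      Set.image_singleton]
  constructor
  · rintro ⟨h1, h2⟩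
    have hinj : Set.InjOn π S := by
      intro e he f hf hef
      by_contra hne
      obtain ⟨u, v, huv⟩ : ∃ u v, G'.ends e = s(u, v) := by
        induction hk' : G'.ends e with
        | _ u v => exact ⟨u, v, rfl⟩
      -- `f` joins the endpoints of `e`, so `e` is not a bridge
      refine h2 e he u v huv (Relation.ReflTransGen.single ⟨f, ⟨hf, Ne.symm hne⟩, ?_⟩)
      rw [← huv, hends e, hends f, hef]
    refine ⟨hinj, fun u v => (hconn S u v).1 (h1 _ _), ?_⟩
    rintro _ ⟨e, he, rfl⟩ u v huv hc
    rw [← himg hinj e he, ← hconn] at hc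
    exact h2 e he _ _ ((hstep u v e).2 huv) hc
  · rintro ⟨hinj, h1, h2⟩
    constructor
    · intro u v
      obtain ⟨u, rfl⟩ := hι.2 u
      obtain ⟨v, rfl⟩ := hι.2 v
      exact (hconn S u v).2 (h1 u v)
    · intro e he u v huv hc
      obtain ⟨u, rfl⟩ := hι.2 u
      obtain ⟨v, rfl⟩ := hι.2 v
      rw [hconn, himg hinj e he] at hc
      exact h2 _ ⟨e, he, rfl⟩ u v ((hstep u v e).1 huv) hc

variable {ord : E → ℕ} {ord' : E' → ℕ} {S : Set E'} {x : E'}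

lemma image_diff_singleton_of_fiber (hx : ∀ y, π y = π x → y = x) (S : Set E') :
    π '' (S \ {x}) = π '' S \ {π x} := by
  ext e
  constructor
  · rintro ⟨y, ⟨hy, hyx⟩, rfl⟩
    exact ⟨⟨y, hy, rfl⟩, fun h => hyx (hx y h)⟩
  · rintro ⟨⟨y, hy, rfl⟩, hyx⟩
    exact ⟨y, ⟨hy, fun h => hyx (congrArg π h)⟩, rfl⟩

lemma internallyActive_iff_image (hι : Function.Bijective ι)
    (hends : ∀ x, G'.ends x = (G.ends (π x)).map ι) (hπ : Function.Surjective π)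
    (hS : G'.IsSpanningTree S) (hx : ∀ y, π y = π x → y = x)
    (hord : ∀ y, ord' x ≤ ord' y ↔ ord (π x) ≤ ord (π y)) (hxS : x ∈ S) :
    G'.InternallyActive ord' S x ↔ G.InternallyActive ord (π '' S) (π x) := by
  have htree := isSpanningTree_iff_image (G := G) (G' := G') hι hends
  obtain ⟨hinj, hT⟩ := (htree S).1 hS
  have himg : ∀ f, π '' (S \ {x} ∪ {f}) = π '' S \ {π x} ∪ {π f} := fun f => by
    rw [Set.image_union, image_diff_singleton_of_fiber hx, Set.image_singleton]
  refine and_congr (iff_of_true hxS ⟨x, hxS, rfl⟩) ?_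
  constructor
  · intro h f hf
    obtain ⟨f, rfl⟩ := hπ f
    rw [← hord]
    refine h f ((htree _).2 ⟨?_, by rw [himg]; exact hf⟩)
    -- an edge of `π '' S \ {π x}` is not in the cocycle: adding it changes nothing
    have hfS : π f ∉ π '' S \ {π x} := by
      intro hmem
      have hf' : G.IsSpanningTree (π '' S \ {π x} ∪ {π f}) := hf
      rw [Set.union_eq_left.2 (Set.singleton_subset_iff.2 hmem)] at hf'
      refine hf'.not_insert (k := π x) (by simp) ?_
      rwa [Set.insert_sdiff_singleton, Set.insert_eq_of_mem (Set.mem_image_of_mem π hxS)]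
    rw [← image_diff_singleton_of_fiber hx] at hfS
    rw [Set.union_singleton, Set.injOn_insert (fun h => hfS ⟨f, h, rfl⟩)]
    exact ⟨hinj.mono Set.sdiff_subset, hfS⟩
  · intro h f hf
    rw [hord]
    refine h (π f) ?_
    have := ((htree _).1 hf).2
    rwa [himg] at this

lemma externallyActive_iff_image (hι : Function.Bijective ι)
    (hends : ∀ x, G'.ends x = (G.ends (π x)).map ι)
    (hS : G'.IsSpanningTree S) (hx : ∀ y, π y = π x → y = x)
    (hord : ∀ y, ord' x ≤ ord' y ↔ ord (π x) ≤ ord (π y)) (hxS : x ∉ S) :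
    G'.ExternallyActive ord' S x ↔ G.ExternallyActive ord (π '' S) (π x) := by
  have htree := isSpanningTree_iff_image (G := G) (G' := G') hι hends
  obtain ⟨hinj, hT⟩ := (htree S).1 hS
  have hxS' : π x ∉ π '' S := by
    rintro ⟨y, hy, hyx⟩
    exact hxS (hx y hyx ▸ hy)
  have hinj' : Set.InjOn π (S ∪ {x}) := by
    rw [Set.union_singleton, Set.injOn_insert hxS]
    exact ⟨hinj, hxS'⟩
  have himgU : π '' (S ∪ {x}) = π '' S ∪ {π x} := by
    rw [Set.image_union, Set.image_singleton]
  have himg : ∀ f ∈ S ∪ {x}, π '' ((S ∪ {x}) \ {f}) = (π '' S ∪ {π x}) \ {π f} := fun f hf => by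
    rw [hinj'.image_sdiff, Set.inter_eq_right.2 (Set.singleton_subset_iff.2 hf),
      Set.image_singleton, himgU]
  refine and_congr (iff_of_true hxS hxS') ?_
  constructor
  · intro h f hf
    have hmem : f ∈ π '' (S ∪ {x}) := by
      by_contra hn
      rw [himgU] at hn
      have hf' : G.IsSpanningTree ((π '' S ∪ {π x}) \ {f}) := hf
      rw [Set.sdiff_singleton_eq_self hn, Set.union_singleton] at hf'
      exact hT.not_insert hxS' hf'
    obtain ⟨f, hfm, rfl⟩ := hmem
    rw [← hord]
    refine h f ((htree _).2 ⟨hinj'.mono Set.sdiff_subset, ?_⟩)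
    rw [himg f hfm]
    exact hf
  · intro h f hf
    have hf' : G'.IsSpanningTree ((S ∪ {x}) \ {f}) := hf
    have hmem : f ∈ S ∪ {x} := by
      by_contra hn
      rw [Set.sdiff_singleton_eq_self hn, Set.union_singleton] at hf'
      exact hS.not_insert hxS hf'
    rw [hord]
    refine h (π f) ?_
    have := ((htree _).1 hf').2
    rwa [himg f hmem] at this

end Collapse

/-- Planar duality turns the fundamental cocycle of an edge into the fundamental cycle of its
dual edge. -/
lemma internallyActive_iff_externallyActive {V W E : Type} {G : Multigraph V E}
    {H : Multigraph W E} (hdual : ∀ T : Set E, G.IsSpanningTree T ↔ H.IsSpanningTree Tᶜ)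
    (ord : E → ℕ) (T : Set E) (e : E) :
    G.InternallyActive ord T e ↔ H.ExternallyActive ord Tᶜ e := by
  have hset : ∀ f, (T \ {e} ∪ {f})ᶜ = (Tᶜ ∪ {e}) \ {f} := fun f => by
    ext y
    simp only [Set.mem_compl_iff, Set.mem_union, Set.mem_sdiff, Set.mem_singleton_iff]
    tauto
  refine and_congr (by simp) (forall_congr' fun f => ?_)
  simp only [cocyc, cyc, Set.mem_ofPred_eq, hdual, hset]

end Multigraph

/-- A corresponding tree `S'` upstairs has image `S` under the collapse map. -/
lemma image_eq_of_corr {E E' : Type} {π : E' → E} {c : E} {c1 c2 : E'} {S : Set E} {S' : Set E'}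
    (hπ : Function.Surjective π) (h1 : π c1 = c)
    (h2 : π c2 = c) (hfib : ∀ x, π x = c → x = c1 ∨ x = c2)
    (hold : ∀ x, π x ≠ c → (x ∈ S' ↔ π x ∈ S))
    (hout : c ∉ S → c1 ∉ S' ∧ c2 ∉ S') (hin : c ∈ S → (c1 ∈ S' ↔ c2 ∉ S')) :
    π '' S' = S := by
  ext e
  obtain ⟨y, rfl⟩ := hπ e
  by_cases hy : π y = c
  · rw [hy]
    constructor
    · rintro ⟨z, hz, hzc⟩
      by_contra hc
      rcases hfib z hzc with rfl | rfl
      · exact (hout hc).1 hz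
      · exact (hout hc).2 hz
    · intro hc
      by_cases hc2 : c2 ∈ S'
      · exact ⟨c2, hc2, h2⟩
      · exact ⟨c1, (hin hc).2 hc2, h1⟩
  · constructor
    · rintro ⟨z, hz, hzy⟩
      rw [← hzy] at hy ⊢
      exact (hold z hy).1 hz
    · intro h
      exact ⟨y, (hold y hy).2 h, rfl⟩

/-- The natural relabeling compares an old crossing with any crossing as before. -/
lemma ord_le_iff_of_relabel {E E' : Type} {π : E' → E} {c : E} {c1 c2 : E'} {ord : E → ℕ}
    {ord' : E' → ℕ} (hi : Function.Injective ord) (hi' : Function.Injective ord')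
    (h1 : π c1 = c) (h2 : π c2 = c) (hfib : ∀ x, π x = c → x = c1 ∨ x = c2)
    (hold : ∀ x y, π x ≠ c → π y ≠ c → (ord' x < ord' y ↔ ord (π x) < ord (π y)))
    (hn1 : ∀ x, π x ≠ c → (ord' x < ord' c1 ↔ ord (π x) < ord c))
    (hn2 : ∀ x, π x ≠ c → (ord' x < ord' c2 ↔ ord (π x) < ord c))
    {x : E'} (hx : π x ≠ c) (y : E') :
    ord' x ≤ ord' y ↔ ord (π x) ≤ ord (π y) := by
  by_cases hy : π y = c
  · have hlt : ord' x < ord' y ↔ ord (π x) < ord c := by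
      rcases hfib y hy with rfl | rfl
      · exact hn1 x hx
      · exact hn2 x hx
    have hne : ord' x ≠ ord' y := fun h => hx (hi' h ▸ hy)
    have hne' : ord (π x) ≠ ord c := fun h => hx (hi h)
    rw [hy]
    omega
  · have := hold y x hy hx
    omega

/-- bigon extensions preserve activity letters.
Let `U' = L'_{l'}` be obtained from `U = L_l` by a bigon extension at the
crossing `c` with a natural relabeling, let `T ⊔ Tᶜ` be a double spanning tree
of the double checkerboard graph of `L`, and let `T' ⊔ T'ᶜ` be a corresponding
double spanning tree of `L'` (under the canonical 1-to-1 or 1-to-2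
correspondence).  Then every edge `ê_k` with `k ≠ c` has the same activity
letter with respect to `T ⊔ Tᶜ` as its correspondent has with respect to
`T' ⊔ T'ᶜ`. -/
theorem statement11 (U U' : LinkConfig) (c : U.C) (ext : BigonExt U U' c)
    (T : Set U.C) (T' : Set U'.C)
    (hT : U.IsDoubleTree T) (hT' : U'.IsDoubleTree T')
    (hcorr : ext.TreeCorr T T') :
    ∀ x : U'.C, ext.πC x ≠ c →
      U'.dblLetter T' x = U.dblLetter T (ext.πC x) := by
  intro x hx
  have hdual : ∀ (U : LinkConfig) (T : Set U.C),
      U.Gd.IsSpanningTree T ↔ U.G.IsSpanningTree Tᶜ := fun U T => by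
    rw [U.dual_trees, compl_compl]
  rcases ext with e | e
  · change e.πC x ≠ c at hx
    change U'.dblLetter T' x = U.dblLetter T (e.πC x)
    obtain ⟨hold, hin, hout⟩ : e.TreeCorr T T' := hcorr
    have himg : e.πC '' T'ᶜ = Tᶜ := by
      refine image_eq_of_corr e.π_surj e.πc1 e.πc2 e.fiber_c
        (fun y hy => not_congr (hold y hy)) (fun h => ?_) (fun h => ?_)
      · simpa using hin (by simpa using h)
      · have := hout h
        simp only [Set.mem_compl_iff]
        tauto
    have hends : ∀ y, U'.Gd.ends y = (U.Gd.ends (e.πC y)).map e.ιW := fun y => by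
      by_cases hy : e.πC y = c
      · rw [hy, e.endsd_c, Sym2.map_mk]
        rcases e.fiber_c y hy with rfl | rfl
        · exact e.endsd_c1
        · exact e.endsd_c2
      · exact e.endsd_old y hy
    have hfib : ∀ y, e.πC y = e.πC x → y = x := fun y h => (e.π_inj x y h.symm hx).symm
    have hord := ord_le_iff_of_relabel U.ord_inj U'.ord_inj e.πc1 e.πc2 e.fiber_c e.ord_old
      e.ord_new1 e.ord_new2 hx
    unfold LinkConfig.dblLetter
    by_cases hxT : x ∈ T'
    · rw [if_pos hxT, if_pos ((hold x hx).1 hxT)]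
      simp only [Multigraph.internallyActive_iff_externallyActive U.dual_trees,
        Multigraph.internallyActive_iff_externallyActive U'.dual_trees]
      rw [Multigraph.externallyActive_iff_image e.ιW_bij hends hT'.2 hfib hord (by simpa using hxT),
        himg]
    · rw [if_neg hxT, if_neg (fun h => hxT ((hold x hx).2 h))]
      rw [Multigraph.internallyActive_iff_image e.ιW_bij hends e.π_surj hT'.2 hfib hord hxT,
        himg]
  · change e.πC x ≠ c at hx
    change U'.dblLetter T' x = U.dblLetter T (e.πC x)
    obtain ⟨hold, hout, hin⟩ : e.TreeCorr T T' := hcorr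
    have himg : e.πC '' T' = T :=
      image_eq_of_corr e.π_surj e.πc1 e.πc2 e.fiber_c hold hout hin
    have hends : ∀ y, U'.G.ends y = (U.G.ends (e.πC y)).map e.ιB := fun y => by
      by_cases hy : e.πC y = c
      · rw [hy, e.ends_c, Sym2.map_mk]
        rcases e.fiber_c y hy with rfl | rfl
        · exact e.ends_c1
        · exact e.ends_c2
      · exact e.ends_old y hy
    have hfib : ∀ y, e.πC y = e.πC x → y = x := fun y h => (e.π_inj x y h.symm hx).symm
    have hord := ord_le_iff_of_relabel U.ord_inj U'.ord_inj e.πc1 e.πc2 e.fiber_c e.ord_old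
      e.ord_new1 e.ord_new2 hx
    unfold LinkConfig.dblLetter
    by_cases hxT : x ∈ T'
    · rw [if_pos hxT, if_pos ((hold x hx).1 hxT)]
      rw [Multigraph.internallyActive_iff_image e.ιB_bij hends e.π_surj hT'.1 hfib hord hxT,
        himg]
    · rw [if_neg hxT, if_neg (fun h => hxT ((hold x hx).2 h))]
      simp only [Multigraph.internallyActive_iff_externallyActive (hdual U),
        Multigraph.internallyActive_iff_externallyActive (hdual U'), compl_compl]
      rw [Multigraph.externallyActive_iff_image e.ιB_bij hends hT'.1 hfib hord hxT, himg]
end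

section
/- Let L_{s;l} be a link configuration satisfying the EI-property, and suppose L has a bigon whose two crossing points carry consecutive labels. Let L''_{s;l''} be obtained from L_{s;l} by the bigon reduction at this bigon with the naturally induced labeling l''. Then L''_{s;l''} also satisfies the EI-property. -/
/-!
A white bigon becomes black when the two colors are exchanged (`LinkConfig.dual`,
`TypeBExt.dual`), so it suffices to treat a black bigon, where the edge of `c` in the checkerboard
graph is subdivided into two edges `c1`, `c2`.

A spanning tree upstairs contains one or both of `c1`, `c2`, and it is a spanning tree exactly when
the edge set below it is, where `c` counts as present iff both halves are
(`TypeAExt.Over.tree_iff`).  By planar duality every activity letter is a statement about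
spanning trees of the checkerboard graph only (`LinkConfig.dblLetter_eq`).

A perfect matching downstairs is lifted by matching one bigon crossing `b` to the new region and
letting the other one, `a`, inherit the match of `c` (`TypeAExt.lift`).  The lift has the
same letter at every crossing off the bigon (`TypeAExt.Pair.act_old`).  At `a` it has the letter
of `c` (`TypeAExt.Pair.act_mid`), provided that, when `c` is matched to a white region, `a` is the
lower-labeled of the two; the choice is free in that case, since both bigon crossings meet
the same white regions.  Hence two matchings sharing a half-edge lift to two matchings sharing a
half-edge, and equality of letters upstairs gives equality downstairs.

Nothing here uses that matchings correspond to spanning trees; a count of edges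
(`LinkConfig.IsPM.not_tree_diff`) replaces it.
-/

/-!
Combinatorial framework for link universes, checkerboard graphs, spanning-tree
activities and Kauffman-bracket evaluations, following
"Kauffman bracket polynomials, perfect matchings and cluster variables".
-/

attribute [local instance] Classical.propDecidable

/-! ### Spanning trees as minimal connected spanning edge sets -/

namespace Multigraph

variable {V E : Type} (G : Multigraph V E)

/-- The spanning subgraph with edge set `T` is connected. -/
def Conn (T : Set E) : Prop := ∀ u v : V, G.Connects T u v

variable {G}

lemma Connects.symm {T : Set E} {u v : V} (h : G.Connects T u v) : G.Connects T v u := by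
  induction h with
  | refl => exact Relation.ReflTransGen.refl
  | tail _ hstep ih =>
    obtain ⟨e, he, h⟩ := hstep
    exact Relation.ReflTransGen.head ⟨e, he, by rw [h, Sym2.eq_swap]⟩ ih

lemma Connects.of_edge {T : Set E} {u v : V} {e : E} (he : e ∈ T) (h : G.ends e = s(u, v)) :
    G.Connects T u v :=
  Relation.ReflTransGen.single ⟨e, he, h⟩

lemma isSpanningTree_iff (T : Set E) :
    G.IsSpanningTree T ↔ G.Conn T ∧ ∀ e ∈ T, ¬ G.Conn (T \ {e}) := by
  unfold IsSpanningTree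
  refine and_congr_right fun hT => ⟨fun h e he hc => ?_, fun h e he u v huv hc => h e he ?_⟩
  · obtain ⟨u, v, huv⟩ : ∃ u v, G.ends e = s(u, v) := by
      induction h : G.ends e with | _ u v => exact ⟨u, v, rfl⟩
    exact h e he u v huv (hc u v)
  · -- every use of `e` in a walk is replaced by the given detour between its ends
    intro x y
    have hxy := hT x y
    induction hxy with
    | refl => exact Relation.ReflTransGen.refl
    | tail _ hstep ih =>
      rename_i p q _
      refine ih.trans ?_
      obtain ⟨f, hf, hpq⟩ := hstep
      by_cases hfe : f = e
      · subst hfe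
        rw [huv, Sym2.eq_iff] at hpq
        rcases hpq with ⟨rfl, rfl⟩ | ⟨rfl, rfl⟩
        · exact hc
        · exact hc.symm
      · exact Connects.of_edge ⟨hf, hfe⟩ hpq

lemma Conn.card_le [Fintype V] [Finite E] {T : Set E} (h : G.Conn T) :
    Fintype.card V ≤ T.ncard + 1 := by
  cases isEmpty_or_nonempty V
  · simp
  let H : SimpleGraph V :=
    { Adj := fun u v => u ≠ v ∧ ∃ e ∈ T, G.ends e = s(u, v)
      symm := ⟨fun u v ⟨hne, e, he, h⟩ => ⟨hne.symm, e, he, by rw [h, Sym2.eq_swap]⟩⟩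
      loopless := ⟨fun u hu => hu.1 rfl⟩ }
  have hH : H.Connected := by
    refine ⟨fun u v => ?_⟩
    have huv := h u v
    induction huv with
    | refl => exact SimpleGraph.Reachable.refl _
    | tail _ hstep ih =>
      rename_i p q _
      by_cases hpq : p = q
      · rwa [← hpq]
      · exact ih.trans (SimpleGraph.Adj.reachable (G := H) ⟨hpq, hstep⟩)
  have hle := hH.card_vert_le_card_edgeSet_add_one
  have hsub : H.edgeSet ⊆ G.ends '' T := by
    intro p hp
    induction p with
    | _ u v =>
      obtain ⟨-, e, he, h⟩ := hp
      exact ⟨e, he, h⟩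
  have h1 : H.edgeSet.ncard ≤ T.ncard :=
    (Set.ncard_le_ncard hsub (Set.toFinite _)).trans (Set.ncard_image_le (Set.toFinite _))
  rw [Nat.card_eq_fintype_card, Nat.card_coe_set_eq] at hle
  omega

end Multigraph

/-! ### Activity letters through spanning trees of `G` alone -/

namespace LinkConfig

variable (U : LinkConfig)

/-- The edge at `x` carries the letter `L` relative to the double tree of `T`, expressed through
the spanning trees of `G` only (cocycles of `Gd` become cycles of `G` by planar duality). -/
def Act (T : Set U.C) (x : U.C) : Prop :=
  (x ∈ T → ∀ f, U.G.IsSpanningTree (T \ {x} ∪ {f}) → U.ord x ≤ U.ord f) ∧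
  (x ∉ T → ∀ f, U.G.IsSpanningTree ((T ∪ {x}) \ {f}) → U.ord x ≤ U.ord f)

lemma dblLetter_eq (T : Set U.C) (x : U.C) :
    U.dblLetter T x = if U.Act T x then .L else .D := by
  by_cases hx : x ∈ T
  · simp [dblLetter, Act, hx, Multigraph.InternallyActive, Multigraph.cocyc]
  · have key : ∀ f, U.Gd.IsSpanningTree (Tᶜ \ {x} ∪ {f}) ↔
        U.G.IsSpanningTree ((T ∪ {x}) \ {f}) := by
      intro f
      rw [U.dual_trees]
      have : ((T ∪ {x}) \ {f})ᶜ = Tᶜ \ {x} ∪ {f} := by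
        ext y; simp only [Set.mem_compl_iff, Set.mem_sdiff, Set.mem_union, Set.mem_singleton_iff]
        tauto
      rw [this]
    simp only [dblLetter, Act, hx, Multigraph.InternallyActive, Multigraph.cocyc,
      Set.mem_ofPred_eq, key]
    simp [hx]

/-- A perfect matching selects fewer edges of `G` than there are black regions, so deleting
a selected edge never leaves a spanning tree.  This holds even without knowing that the
selected edges form a spanning tree. -/
lemma IsPM.not_tree_diff {U : LinkConfig} {m : U.C → U.B ⊕ U.W} (hm : U.IsPM m) {x : U.C}
    (hx : x ∈ U.treeOf m) : ¬ U.G.IsSpanningTree (U.treeOf m \ {x}) := by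
  intro h
  have h1 := Multigraph.Conn.card_le (G := U.G) h.1
  have h2 : (U.treeOf m).ncard ≤ ({U.rootB}ᶜ : Set U.B).ncard := by
    have : Nonempty U.B := ⟨U.rootB⟩
    have hne : ∀ y ∈ U.treeOf m, ∃ b, m y = Sum.inl b := fun y hy => hy
    choose! g hg using hne
    refine Set.ncard_le_ncard_of_injOn g ?_ ?_ (Set.toFinite _)
    · intro y hy
      have := hm.2.1 y
      rw [hg y hy] at this
      exact this
    · intro y hy z hz hyz
      obtain ⟨w, -, hw⟩ := hm.2.2 (m y) (hm.2.1 y)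
      have hzy : m z = m y := by rw [hg y hy, hg z hz, hyz]
      rw [hw y rfl, hw z hzy]
  have h3 : (U.treeOf m \ {x}).ncard + 1 = (U.treeOf m).ncard :=
    Set.ncard_sdiff_singleton_add_one hx (Set.toFinite _)
  have h4 := Set.ncard_add_ncard_compl ({U.rootB} : Set U.B)
  rw [Set.ncard_singleton, Nat.card_eq_fintype_card] at h4
  omega

end LinkConfig

/-! ### Spanning trees under a bigon extension -/

namespace TypeAExt

variable {U U' : LinkConfig} {c : U.C} (e : TypeAExt U U' c)

/-- The edge set `T'` of the extension lies over the edge set `T`: they agree away from the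
bigon, `T'` contains at least one of the two halves of the subdivided edge, and it contains both
exactly when `T` contains the edge of `c`. -/
structure Over (T' : Set U'.C) (T : Set U.C) : Prop where
  old : ∀ y, e.πC y ≠ c → (y ∈ T' ↔ e.πC y ∈ T)
  mid : c ∈ T ↔ e.c1 ∈ T' ∧ e.c2 ∈ T'
  one : e.c1 ∈ T' ∨ e.c2 ∈ T'

variable {e}

lemma Over.conn_iff {T' : Set U'.C} {T : Set U.C} (h : e.Over T' T) :
    U'.G.Conn T' ↔ U.G.Conn T := by
  constructor
  · intro hc
    -- Contract the bigon vertex to the end of a half that belongs to `T'`.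
    let ρ : U'.B → U.B := fun b' =>
      if hb : ∃ b, e.ιB b = b' then hb.choose else if e.c2 ∈ T' then e.rN else e.rS
    have hρ : ∀ b, ρ (e.ιB b) = b := by
      intro b
      have hb : ∃ b₁, e.ιB b₁ = e.ιB b := ⟨b, rfl⟩
      simp only [ρ, dif_pos hb]
      exact e.ιB_inj hb.choose_spec
    have hρn : ρ e.newB = if e.c2 ∈ T' then e.rN else e.rS := by
      have hb : ¬ ∃ b, e.ιB b = e.newB := fun ⟨b, hb⟩ => e.newB_not b hb
      simp only [ρ, dif_neg hb]
    -- The two halves of the subdivided edge contract to a point or to the edge of `c`.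
    have hedge : ∀ f ∈ T', ∃ u v, U'.G.ends f = s(u, v) ∧ U.G.Connects T (ρ u) (ρ v) := by
      intro f hf
      by_cases hfc : e.πC f = c
      · rcases e.fiber_c f hfc with rfl | rfl
        · refine ⟨_, _, e.ends_c1, ?_⟩
          rw [hρ, hρn]
          split_ifs with h2
          · exact Multigraph.Connects.of_edge (h.mid.2 ⟨hf, h2⟩) (by rw [e.ends_c, Sym2.eq_swap])
          · exact Relation.ReflTransGen.refl
        · refine ⟨_, _, e.ends_c2, ?_⟩
          rw [hρ, hρn, if_pos hf]
          exact Relation.ReflTransGen.refl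
      · have hends := e.ends_old f hfc
        induction hpq : U.G.ends (e.πC f) with
        | _ p q =>
          rw [hpq, Sym2.map_mk] at hends
          refine ⟨_, _, hends, ?_⟩
          simp only [hρ]
          exact Multigraph.Connects.of_edge ((h.old f hfc).1 hf) hpq
    intro u v
    suffices H : ∀ x y, U'.G.Connects T' x y → U.G.Connects T (ρ x) (ρ y) by
      have := H _ _ (hc (e.ιB u) (e.ιB v))
      rwa [hρ, hρ] at this
    intro x y hxy
    induction hxy with
    | refl => exact Relation.ReflTransGen.refl
    | tail _ hstep ih =>
      refine ih.trans ?_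
      obtain ⟨f, hf, hpq⟩ := hstep
      obtain ⟨u, v, huv, hcon⟩ := hedge f hf
      rw [huv, Sym2.eq_iff] at hpq
      rcases hpq with ⟨rfl, rfl⟩ | ⟨rfl, rfl⟩
      · exact hcon
      · exact hcon.symm
  · intro hc
    have hι : ∀ u v, U'.G.Connects T' (e.ιB u) (e.ιB v) := by
      intro u v
      have huv := hc u v
      induction huv with
      | refl => exact Relation.ReflTransGen.refl
      | tail _ hstep ih =>
        rename_i p q _
        refine ih.trans ?_
        obtain ⟨f, hf, hpq⟩ := hstep
        by_cases hfc : f = c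
        · subst hfc
          obtain ⟨h1, h2⟩ := h.mid.1 hf
          have hNS : U'.G.Connects T' (e.ιB e.rN) (e.ιB e.rS) :=
            (Multigraph.Connects.of_edge h2 e.ends_c2).trans
              (Multigraph.Connects.of_edge h1 e.ends_c1).symm
          rw [e.ends_c, Sym2.eq_iff] at hpq
          rcases hpq with ⟨rfl, rfl⟩ | ⟨rfl, rfl⟩
          · exact hNS
          · exact hNS.symm
        · obtain ⟨f', rfl⟩ := e.π_surj f
          refine Multigraph.Connects.of_edge ((h.old f' hfc).2 hf) ?_
          rw [e.ends_old f' hfc, hpq, Sym2.map_mk]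
    have hnew : ∃ b, U'.G.Connects T' e.newB (e.ιB b) := by
      rcases h.one with h1 | h2
      · exact ⟨_, (Multigraph.Connects.of_edge h1 e.ends_c1).symm⟩
      · exact ⟨_, (Multigraph.Connects.of_edge h2 e.ends_c2).symm⟩
    obtain ⟨b₀, hb₀⟩ := hnew
    have hall : ∀ x, U'.G.Connects T' x (e.ιB b₀) := by
      intro x
      rcases e.B_cover x with rfl | ⟨b, rfl⟩
      · exact hb₀
      · exact hι _ _
    exact fun x y => (hall x).trans (hall y).symm

variable (e) in
/-- If neither half of the subdivided edge is present, the bigon vertex is isolated. -/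
lemma one_of_conn {T' : Set U'.C} (h : U'.G.Conn T') : e.c1 ∈ T' ∨ e.c2 ∈ T' := by
  have h0 := h e.newB (e.ιB e.rN)
  rcases Relation.ReflTransGen.cases_head h0 with h1 | ⟨b, ⟨f, hf, hfb⟩, -⟩
  · exact absurd h1.symm (e.newB_not _)
  · by_cases hfc : e.πC f = c
    · rcases e.fiber_c f hfc with rfl | rfl
      · exact Or.inl hf
      · exact Or.inr hf
    · have hmem : e.newB ∈ U'.G.ends f := by rw [hfb]; exact Sym2.mem_mk_left _ _
      rw [e.ends_old f hfc, Sym2.mem_map] at hmem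
      obtain ⟨b, -, hb⟩ := hmem
      exact absurd hb (e.newB_not b)

lemma ne_of_old {y : U'.C} (hy : e.πC y ≠ c) : y ≠ e.c1 ∧ y ≠ e.c2 :=
  ⟨fun h => hy (h ▸ e.πc1), fun h => hy (h ▸ e.πc2)⟩

lemma Over.tree_iff {T' : Set U'.C} {T : Set U.C} (h : e.Over T' T) :
    U'.G.IsSpanningTree T' ↔ U.G.IsSpanningTree T := by
  rw [Multigraph.isSpanningTree_iff, Multigraph.isSpanningTree_iff, h.conn_iff]
  have hold : ∀ y, e.πC y ≠ c → e.Over (T' \ {y}) (T \ {e.πC y}) := by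
    intro y hy
    have hy' := ne_of_old hy
    refine ⟨fun z hz => ?_, ?_, ?_⟩
    · have : z = y ↔ e.πC z = e.πC y := ⟨fun h => h ▸ rfl, fun h => e.π_inj z y h hz⟩
      simp only [Set.mem_sdiff, Set.mem_singleton_iff, h.old z hz, this]
    · simp [h.mid, hy'.1.symm, hy'.2.symm, hy.symm]
    · simpa [hy'.1.symm, hy'.2.symm] using h.one
  have h1 : e.c2 ∈ T' → e.Over (T' \ {e.c1}) (T \ {c}) := by
    intro h2
    refine ⟨fun z hz => ?_, ?_, Or.inr ⟨h2, e.c1_ne_c2.symm⟩⟩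
    · simp [h.old z hz, hz, (ne_of_old hz).1]
    · simp
  have h2 : e.c1 ∈ T' → e.Over (T' \ {e.c2}) (T \ {c}) := by
    intro h2
    refine ⟨fun z hz => ?_, ?_, Or.inl ⟨h2, e.c1_ne_c2⟩⟩
    · simp [h.old z hz, hz, (ne_of_old hz).2]
    · simp
  refine and_congr_right fun _ => ⟨fun H x hx => ?_, fun H y hy hcon => ?_⟩
  · by_cases hxc : x = c
    · subst hxc
      obtain ⟨m1, m2⟩ := h.mid.1 hx
      rw [← (h1 m2).conn_iff]
      exact H _ m1
    · obtain ⟨y, rfl⟩ := e.π_surj x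
      rw [← (hold y hxc).conn_iff]
      exact H y ((h.old y hxc).2 hx)
  · by_cases hyc : e.πC y = c
    · rcases e.fiber_c y hyc with rfl | rfl
      · have m2 : e.c2 ∈ T' := by
          rcases e.one_of_conn hcon with h' | h'
          · exact absurd rfl h'.2
          · exact h'.1
        exact H c (h.mid.2 ⟨hy, m2⟩) ((h1 m2).conn_iff.1 hcon)
      · have m1 : e.c1 ∈ T' := by
          rcases e.one_of_conn hcon with h' | h'
          · exact h'.1
          · exact absurd rfl h'.2
        exact H c (h.mid.2 ⟨m1, hy⟩) ((h2 m1).conn_iff.1 hcon)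
    · exact H _ ((h.old y hyc).1 hy) ((hold y hyc).conn_iff.1 hcon)

variable (e)

/-! ### Lifting perfect matchings and comparing letters -/

/-- `a`, `b` are the two crossings of the bigon, in one of the two orders. -/
def Pair (a b : U'.C) : Prop := (a = e.c1 ∧ b = e.c2) ∨ (a = e.c2 ∧ b = e.c1)

/-- Lift of a matching along a bigon extension: `b` is matched to the new bigon region and every
other crossing (in particular the other bigon crossing) inherits the match of its image. -/
noncomputable def lift (b : U'.C) (m : U.C → U.B ⊕ U.W) : U'.C → U'.B ⊕ U'.W := fun y =>
  if y = b then Sum.inl e.newB else Sum.map e.ιB e.ιW (m (e.πC y))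

variable {e} {a b : U'.C}

lemma Pair.ne (hab : e.Pair a b) : a ≠ b := by
  rcases hab with ⟨rfl, rfl⟩ | ⟨rfl, rfl⟩
  · exact e.c1_ne_c2
  · exact e.c1_ne_c2.symm

lemma Pair.map_left (hab : e.Pair a b) : e.πC a = c := by
  rcases hab with ⟨rfl, rfl⟩ | ⟨rfl, rfl⟩
  · exact e.πc1
  · exact e.πc2

lemma Pair.symm (hab : e.Pair a b) : e.Pair b a := by
  rcases hab with ⟨rfl, rfl⟩ | ⟨rfl, rfl⟩
  · exact Or.inr ⟨rfl, rfl⟩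
  · exact Or.inl ⟨rfl, rfl⟩

lemma Pair.fiber (hab : e.Pair a b) {y : U'.C} (hy : e.πC y = c) : y = a ∨ y = b := by
  rcases hab with ⟨rfl, rfl⟩ | ⟨rfl, rfl⟩
  · exact e.fiber_c y hy
  · exact (e.fiber_c y hy).symm

/-- Off `b` the collapse map is injective; `Pair.surj_off` says it is still surjective there. -/
lemma Pair.inj_off (hab : e.Pair a b) {y z : U'.C} (hy : y ≠ b) (hz : z ≠ b) :
    e.πC y = e.πC z ↔ y = z := by
  refine ⟨fun h => ?_, fun h => h ▸ rfl⟩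
  by_cases hyc : e.πC y = c
  · rw [(hab.fiber hyc).resolve_right hy, (hab.fiber (h ▸ hyc)).resolve_right hz]
  · exact e.π_inj y z h hyc

lemma Pair.surj_off (hab : e.Pair a b) (x : U.C) : ∃ y, y ≠ b ∧ e.πC y = x := by
  obtain ⟨y, rfl⟩ := e.π_surj x
  by_cases hyb : y = b
  · subst hyb
    exact ⟨a, hab.ne, hab.map_left.trans hab.symm.map_left.symm⟩
  · exact ⟨y, hyb, rfl⟩

lemma Pair.ord_lt (hab : e.Pair a b) {y : U'.C} (hy : e.πC y ≠ c) :
    U'.ord y < U'.ord a ↔ U.ord (e.πC y) < U.ord c := by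
  rcases hab with ⟨rfl, rfl⟩ | ⟨rfl, rfl⟩
  · exact e.ord_new1 y hy
  · exact e.ord_new2 y hy

lemma Pair.ord_le_old (hab : e.Pair a b) {y : U'.C} (hy : e.πC y ≠ c) :
    U'.ord y ≤ U'.ord a ↔ U.ord (e.πC y) ≤ U.ord c := by
  have h1 : U'.ord y ≠ U'.ord a := fun h => hy (U'.ord_inj h ▸ hab.map_left)
  have h2 : U.ord (e.πC y) ≠ U.ord c := fun h => hy (U.ord_inj h)
  have := hab.ord_lt hy
  omega

lemma ord_le_iff {x y : U'.C} (hx : e.πC x ≠ c) (hy : e.πC y ≠ c) :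
    U'.ord x ≤ U'.ord y ↔ U.ord (e.πC x) ≤ U.ord (e.πC y) := by
  rw [← not_lt, ← not_lt, e.ord_old y x hy hx]

lemma Pair.over_iff (hab : e.Pair a b) {T' : Set U'.C} {T : Set U.C} :
    e.Over T' T ↔ (∀ y, e.πC y ≠ c → (y ∈ T' ↔ e.πC y ∈ T)) ∧
      (c ∈ T ↔ a ∈ T' ∧ b ∈ T') ∧ (a ∈ T' ∨ b ∈ T') := by
  rcases hab with ⟨rfl, rfl⟩ | ⟨rfl, rfl⟩
  · exact ⟨fun h => ⟨h.old, h.mid, h.one⟩, fun h => ⟨h.1, h.2.1, h.2.2⟩⟩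
  · exact ⟨fun h => ⟨h.old, h.mid.trans and_comm, h.one.symm⟩,
      fun h => ⟨h.1, h.2.1.trans and_comm, h.2.2.symm⟩⟩

lemma Pair.one_of_tree (hab : e.Pair a b) {T' : Set U'.C} (h : U'.G.IsSpanningTree T') :
    a ∈ T' ∨ b ∈ T' := by
  rcases hab with ⟨rfl, rfl⟩ | ⟨rfl, rfl⟩
  · exact e.one_of_conn h.1
  · exact (e.one_of_conn h.1).symm

section Letters

/- In this section `T'` lies over `T` and contains `b`, so that `a` plays the role of `c`. -/
variable {T' : Set U'.C} {T : Set U.C}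

lemma Pair.exchange_cocyc (hab : e.Pair a b) (h : e.Over T' T) (hb : b ∈ T') {x f : U'.C}
    (hx : x ≠ b) (hf : f ≠ b) :
    U'.G.IsSpanningTree (T' \ {x} ∪ {f}) ↔
      U.G.IsSpanningTree (T \ {e.πC x} ∪ {e.πC f}) := by
  refine Over.tree_iff (e := e) (hab.over_iff.2 ?_)
  obtain ⟨h1, h2, -⟩ := hab.over_iff.1 h
  have hπ : ∀ {y z}, y ≠ b → z ≠ b → (e.πC y = e.πC z ↔ y = z) := hab.inj_off
  have hbm : b ∈ T' \ {x} ∪ {f} := Or.inl ⟨hb, hx.symm⟩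
  refine ⟨fun y hy => ?_, ?_, Or.inr hbm⟩
  · have hyb : y ≠ b := fun h => hy (h ▸ hab.symm.map_left)
    simp only [Set.mem_union, Set.mem_sdiff, Set.mem_singleton_iff, h1 y hy, hπ hyb hx, hπ hyb hf]
  · have e1 := hπ hab.ne hx
    have e2 := hπ hab.ne hf
    rw [hab.map_left] at e1 e2
    simp only [hbm, and_true, Set.mem_union, Set.mem_sdiff, Set.mem_singleton_iff, e1, e2, h2, hb]

lemma Pair.exchange_cyc (hab : e.Pair a b) (h : e.Over T' T) (hb : b ∈ T') {x f : U'.C}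
    (hx : x ≠ b) (hf : f ≠ b) :
    U'.G.IsSpanningTree ((T' ∪ {x}) \ {f}) ↔
      U.G.IsSpanningTree ((T ∪ {e.πC x}) \ {e.πC f}) := by
  refine Over.tree_iff (e := e) (hab.over_iff.2 ?_)
  obtain ⟨h1, h2, -⟩ := hab.over_iff.1 h
  have hπ : ∀ {y z}, y ≠ b → z ≠ b → (e.πC y = e.πC z ↔ y = z) := hab.inj_off
  have hbm : b ∈ (T' ∪ {x}) \ {f} := ⟨Or.inl hb, hf.symm⟩
  refine ⟨fun y hy => ?_, ?_, Or.inr hbm⟩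
  · have hyb : y ≠ b := fun h => hy (h ▸ hab.symm.map_left)
    simp only [Set.mem_union, Set.mem_sdiff, Set.mem_singleton_iff, h1 y hy, hπ hyb hx, hπ hyb hf]
  · have e1 := hπ hab.ne hx
    have e2 := hπ hab.ne hf
    rw [hab.map_left] at e1 e2
    simp only [hbm, and_true, Set.mem_union, Set.mem_sdiff, Set.mem_singleton_iff, e1, e2, h2, hb]

/-- Removing `x` without replacement downstairs corresponds to exchanging it for `b`, which
is already present upstairs. -/
lemma Pair.not_exchange_b (hab : e.Pair a b) (h : e.Over T' T) (hb : b ∈ T') {x : U'.C}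
    (hx : x ≠ b) (hT : ¬ U.G.IsSpanningTree (T \ {e.πC x})) :
    ¬ U'.G.IsSpanningTree (T' \ {x} ∪ {b}) := by
  rwa [Over.tree_iff (e := e) (T := T \ {e.πC x})]
  refine hab.over_iff.2 ?_
  obtain ⟨h1, h2, -⟩ := hab.over_iff.1 h
  have hbm : b ∈ T' \ {x} ∪ {b} := Or.inr rfl
  refine ⟨fun y hy => ?_, ?_, Or.inr hbm⟩
  · have hyb : y ≠ b := fun h => hy (h ▸ hab.symm.map_left)
    simp only [Set.mem_union, Set.mem_sdiff, Set.mem_singleton_iff, h1 y hy, hab.inj_off hyb hx,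
      hyb, or_false]
  · have e1 := hab.inj_off hab.ne hx
    rw [hab.map_left] at e1
    simp only [hbm, and_true, Set.mem_union, Set.mem_sdiff, Set.mem_singleton_iff, e1, h2, hb,
      hab.ne, or_false]

lemma Pair.mem_iff (hab : e.Pair a b) (h : e.Over T' T) (hb : b ∈ T') {x : U'.C}
    (hx : x ≠ b) : x ∈ T' ↔ e.πC x ∈ T := by
  obtain ⟨h1, h2, -⟩ := hab.over_iff.1 h
  by_cases hxc : e.πC x = c
  · obtain rfl := (hab.fiber hxc).resolve_right hx
    rw [hxc, h2]
    simp [hb]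
  · exact h1 x hxc

/-- Letters agree at every crossing off the bigon. -/
lemma Pair.act_old (hab : e.Pair a b) (h : e.Over T' T) (hb : b ∈ T') {x : U'.C}
    (hx : e.πC x ≠ c) (hT : e.πC x ∈ T → ¬ U.G.IsSpanningTree (T \ {e.πC x})) :
    U'.Act T' x ↔ U.Act T (e.πC x) := by
  have hxb : x ≠ b := fun h => hx (h ▸ hab.symm.map_left)
  have hord : ∀ f, U'.ord x ≤ U'.ord f ↔ U.ord (e.πC x) ≤ U.ord (e.πC f) := by
    intro f
    by_cases hf : e.πC f = c
    · rw [hf]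
      rcases hab.fiber hf with rfl | rfl
      · exact hab.ord_le_old hx
      · exact hab.symm.ord_le_old hx
    · exact ord_le_iff hx hf
  have hmem := hab.mem_iff h hb hxb
  refine and_congr ?_ ?_
  · rw [hmem]
    refine forall_congr' fun hxT => ⟨fun H f hf => ?_, fun H f hf => ?_⟩
    · obtain ⟨f', hf'b, rfl⟩ := hab.surj_off f
      exact (hord f').1 (H f' ((hab.exchange_cocyc h hb hxb hf'b).2 hf))
    · by_cases hfb : f = b
      · subst hfb
        exact absurd hf (hab.not_exchange_b h hb hxb (hT hxT))
      · exact (hord f).2 (H _ ((hab.exchange_cocyc h hb hxb hfb).1 hf))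
  · rw [hmem]
    refine forall_congr' fun hxT => ⟨fun H f hf => ?_, fun H f hf => ?_⟩
    · obtain ⟨f', hf'b, rfl⟩ := hab.surj_off f
      exact (hord f').1 (H f' ((hab.exchange_cyc h hb hxb hf'b).2 hf))
    · by_cases hfb : f = b
      · subst hfb
        -- The other bigon edge `a` must be present, and `a`, `b` are then interchangeable.
        have ha : a ∈ T' := by
          rcases hab.one_of_tree hf with h1 | h1
          · rcases h1.1 with h2 | h2
            · exact h2
            · exact absurd (h2 ▸ hab.map_left) hx
          · exact absurd rfl h1.2
        have hf' : U.G.IsSpanningTree ((T ∪ {e.πC x}) \ {e.πC a}) := by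
          rw [hab.map_left]
          exact (hab.symm.map_left ▸ hab.symm.exchange_cyc h ha
            (fun h : x = a => hx (h ▸ hab.map_left)) hab.ne.symm).1 hf
        have := H _ hf'
        rw [hab.map_left] at this
        exact (hab.symm.ord_le_old hx).2 this
      · exact (hord f).2 (H _ ((hab.exchange_cyc h hb hxb hfb).1 hf))

/-- Letters at `c` and `a` agree.  If `c ∉ T` then `b` lies in the fundamental cycle of `a`, and
it is harmless only when `a` has the smaller label. -/
lemma Pair.act_mid (hab : e.Pair a b) (h : e.Over T' T) (hb : b ∈ T')
    (hT : c ∈ T → ¬ U.G.IsSpanningTree (T \ {c}))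
    (hlow : c ∉ T → U'.ord a ≤ U'.ord b) :
    U'.Act T' a ↔ U.Act T c := by
  have hord : ∀ f, f ≠ b → (U'.ord a ≤ U'.ord f ↔ U.ord c ≤ U.ord (e.πC f)) := by
    intro f hfb
    by_cases hf : e.πC f = c
    · obtain rfl := (hab.fiber hf).resolve_right hfb
      simp [hf]
    · rw [← not_lt, ← not_lt, hab.ord_lt hf]
  have hmem := hab.mem_iff h hb hab.ne
  have ex1 := fun f (hf : f ≠ b) => hab.exchange_cocyc h hb hab.ne hf
  have ex2 := fun f (hf : f ≠ b) => hab.exchange_cyc h hb hab.ne hf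
  have nb := hab.not_exchange_b h hb hab.ne
  rw [hab.map_left] at hmem nb
  simp only [hab.map_left] at ex1 ex2
  refine and_congr ?_ ?_
  · rw [hmem]
    refine forall_congr' fun hxT => ⟨fun H f hf => ?_, fun H f hf => ?_⟩
    · obtain ⟨f', hf'b, rfl⟩ := hab.surj_off f
      exact (hord f' hf'b).1 (H f' ((ex1 f' hf'b).2 hf))
    · by_cases hfb : f = b
      · subst hfb
        exact absurd hf (nb (hT hxT))
      · exact (hord f hfb).2 (H _ ((ex1 f hfb).1 hf))
  · rw [hmem]
    refine forall_congr' fun hxT => ⟨fun H f hf => ?_, fun H f hf => ?_⟩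
    · obtain ⟨f', hf'b, rfl⟩ := hab.surj_off f
      exact (hord f' hf'b).1 (H f' ((ex2 f' hf'b).2 hf))
    · by_cases hfb : f = b
      · subst hfb
        exact hlow hxT
      · exact (hord f hfb).2 (H _ ((ex2 f hfb).1 hf))

end Letters

lemma lift_of_ne {m : U.C → U.B ⊕ U.W} {y : U'.C} (hy : y ≠ b) :
    e.lift b m y = Sum.map e.ιB e.ιW (m (e.πC y)) := if_neg hy

lemma rootB_eq (e : TypeAExt U U' c) : U'.rootB = e.ιB U.rootB := by
  unfold LinkConfig.rootB
  rw [e.s_pres, e.seg_black_old]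

lemma rootW_eq (e : TypeAExt U U' c) : U'.rootW = e.ιW U.rootW := by
  unfold LinkConfig.rootW
  rw [e.s_pres, e.seg_white_old]

lemma nonRoot_map (R : U.B ⊕ U.W) : U'.NonRoot (Sum.map e.ιB e.ιW R) ↔ U.NonRoot R := by
  cases R with
  | inl r => simp [LinkConfig.NonRoot, e.rootB_eq, e.ιB_inj.eq_iff]
  | inr r => simp [LinkConfig.NonRoot, e.rootW_eq, e.ιW_bij.injective.eq_iff]

lemma incid_map {x : U'.C} (hx : e.πC x ≠ c) {R : U.B ⊕ U.W} (h : U.Incid (e.πC x) R) :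
    U'.Incid x (Sum.map e.ιB e.ιW R) := by
  cases R with
  | inl r =>
    simp only [Sum.map_inl, LinkConfig.Incid] at h ⊢
    rw [e.ends_old x hx]
    exact Sym2.mem_map.2 ⟨r, h, rfl⟩
  | inr r =>
    simp only [Sum.map_inr, LinkConfig.Incid] at h ⊢
    rw [e.endsd_old x hx]
    exact Sym2.mem_map.2 ⟨r, h, rfl⟩

lemma Pair.lift_isPM (hab : e.Pair a b) {m : U.C → U.B ⊕ U.W} (hm : U.IsPM m)
    (ha : U'.Incid a (Sum.map e.ιB e.ιW (m c))) : U'.IsPM (e.lift b m) := by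
  refine ⟨fun y => ?_, fun y => ?_, fun R hR => ?_⟩
  · by_cases hyb : y = b
    · subst hyb
      have hends : e.newB ∈ U'.G.ends y := by
        rcases hab with ⟨-, rfl⟩ | ⟨-, rfl⟩
        · rw [e.ends_c2]; exact Sym2.mem_mk_right _ _
        · rw [e.ends_c1]; exact Sym2.mem_mk_right _ _
      simpa [lift, LinkConfig.Incid] using hends
    · rw [lift_of_ne hyb]
      by_cases hyc : e.πC y = c
      · obtain rfl := (hab.fiber hyc).resolve_right hyb
        rwa [hyc]
      · exact incid_map hyc (hm.1 _)
  · by_cases hyb : y = b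
    · subst hyb
      simp only [lift, if_true, LinkConfig.NonRoot, e.rootB_eq]
      exact (e.newB_not _).symm
    · rw [lift_of_ne hyb, nonRoot_map]
      exact hm.2.1 _
  · have hcover : R = Sum.inl e.newB ∨ ∃ R₀, Sum.map e.ιB e.ιW R₀ = R := by
      cases R with
      | inl r =>
        rcases e.B_cover r with rfl | ⟨r₀, rfl⟩
        · exact Or.inl rfl
        · exact Or.inr ⟨Sum.inl r₀, rfl⟩
      | inr r =>
        obtain ⟨r₀, rfl⟩ := e.ιW_bij.surjective r
        exact Or.inr ⟨Sum.inr r₀, rfl⟩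
    have hnew : ∀ R₀, Sum.map e.ιB e.ιW R₀ ≠ Sum.inl e.newB := by
      intro R₀ h
      cases R₀ with
      | inl r => exact e.newB_not r (Sum.inl_injective h)
      | inr r => cases h
    rcases hcover with rfl | ⟨R₀, rfl⟩
    · refine ⟨b, if_pos rfl, fun y hy => ?_⟩
      by_contra hyb
      exact hnew _ ((lift_of_ne hyb).symm.trans hy)
    · rw [nonRoot_map] at hR
      obtain ⟨x, hx, hxu⟩ := hm.2.2 R₀ hR
      obtain ⟨x', hx'b, rfl⟩ := hab.surj_off x
      refine ⟨x', by simp only [lift_of_ne hx'b, hx], fun y hy => ?_⟩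
      by_cases hyb : y = b
      · subst hyb
        simp only [lift, if_true] at hy
        exact absurd hy.symm (hnew _)
      · have hy' := (e.ιB_inj.sumMap e.ιW_bij.injective) ((lift_of_ne hyb).symm.trans hy)
        exact (hab.inj_off hyb hx'b).1 (hxu _ hy')

lemma mem_lift_b (m : U.C → U.B ⊕ U.W) : b ∈ U'.treeOf (e.lift b m) :=
  ⟨e.newB, if_pos rfl⟩

lemma Pair.lift_over (hab : e.Pair a b) (m : U.C → U.B ⊕ U.W) :
    e.Over (U'.treeOf (e.lift b m)) (U.treeOf m) := by
  have key : ∀ y, y ≠ b → (y ∈ U'.treeOf (e.lift b m) ↔ e.πC y ∈ U.treeOf m) := by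
    intro y hy
    simp only [LinkConfig.treeOf, Set.mem_ofPred_eq, lift_of_ne hy]
    cases m (e.πC y) <;> simp
  have hb : b ∈ U'.treeOf (e.lift b m) := mem_lift_b m
  refine hab.over_iff.2 ⟨fun y hy => key y fun h => hy (h ▸ hab.symm.map_left), ?_, Or.inr hb⟩
  rw [key a hab.ne, hab.map_left]
  simp [hb]

/-- A choice of the bigon crossing `a` that inherits the match of `c`: it must be incident to that
region (forced for a black region), and for a white region it is taken to be the one with
the smaller label. -/
lemma exists_pair {m : U.C → U.B ⊕ U.W} (hm : U.IsPM m) :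
    ∃ a b, e.Pair a b ∧ U'.Incid a (Sum.map e.ιB e.ιW (m c)) ∧
      ∀ r, m c = Sum.inr r → U'.ord a ≤ U'.ord b := by
  have hinc := hm.1 c
  cases hmc : m c with
  | inl r =>
    rw [hmc] at hinc
    simp only [LinkConfig.Incid, e.ends_c, Sym2.mem_iff] at hinc
    rcases hinc with rfl | rfl
    · exact ⟨_, _, Or.inr ⟨rfl, rfl⟩, by simp [LinkConfig.Incid, e.ends_c2], by simp⟩
    · exact ⟨_, _, Or.inl ⟨rfl, rfl⟩, by simp [LinkConfig.Incid, e.ends_c1], by simp⟩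
  | inr r =>
    rw [hmc] at hinc
    have hr : e.ιW r ∈ s(e.ιW e.rW, e.ιW e.rE) := by
      simp only [LinkConfig.Incid, e.endsd_c, Sym2.mem_iff] at hinc
      rcases hinc with rfl | rfl <;> simp
    rcases le_total (U'.ord e.c1) (U'.ord e.c2) with hle | hle
    · exact ⟨_, _, Or.inl ⟨rfl, rfl⟩, by simpa [LinkConfig.Incid, e.endsd_c1] using hr,
        fun _ _ => hle⟩
    · exact ⟨_, _, Or.inr ⟨rfl, rfl⟩, by simpa [LinkConfig.Incid, e.endsd_c2] using hr,
        fun _ _ => hle⟩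

/-- Reduction at a black bigon preserves the EI-property. -/
theorem eiConfig (e : TypeAExt U U' c) (hEI : U'.EIconfig) : U.EIconfig := by
  intro x R _ _ m m' hm hm' hmx hmx'
  have comb : ∀ {y a b a' b'}, e.Pair a b → e.Pair a' b' → y ≠ b → y ≠ b' → e.πC y = x →
      U'.Incid a (Sum.map e.ιB e.ιW (m c)) → U'.Incid a' (Sum.map e.ιB e.ιW (m' c)) →
      (U'.Act (U'.treeOf (e.lift b m)) y ↔ U.Act (U.treeOf m) x) →
      (U'.Act (U'.treeOf (e.lift b' m')) y ↔ U.Act (U.treeOf m') x) →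
      U.matchLetter m x = U.matchLetter m' x := by
    intro y a b a' b' hab hab' hyb hyb' hyx ha ha' h1 h2
    have p := hab.lift_isPM hm ha
    have p' := hab'.lift_isPM hm' ha'
    have q : e.lift b m y = Sum.map e.ιB e.ιW R := by rw [lift_of_ne hyb, hyx, hmx]
    have q' : e.lift b' m' y = Sum.map e.ιB e.ιW R := by rw [lift_of_ne hyb', hyx, hmx']
    have := hEI y _ (q ▸ p.1 y) (q ▸ p.2.1 y) _ _ p p' q q'
    simpa only [LinkConfig.matchLetter, LinkConfig.dblLetter_eq, h1, h2] using this
  obtain ⟨a, b, hab, ha, hlow⟩ := exists_pair (e := e) hm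
  by_cases hxc : x = c
  · subst hxc
    have hmid : ∀ {n}, U.IsPM n → n x = R →
        (U'.Act (U'.treeOf (e.lift b n)) a ↔ U.Act (U.treeOf n) x) := by
      intro n hn hnx
      refine hab.act_mid (hab.lift_over n) (mem_lift_b n) (fun h => hn.not_tree_diff h) ?_
      intro hx
      cases R with
      | inl r => exact absurd ⟨r, hnx⟩ hx
      | inr r => exact hlow r hmx
    exact comb hab hab hab.ne hab.ne hab.map_left ha (by rwa [hmx', ← hmx])
      (hmid hm hmx) (hmid hm' hmx')
  · obtain ⟨a', b', hab', ha', -⟩ := exists_pair (e := e) hm'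
    obtain ⟨y, rfl⟩ := e.π_surj x
    exact comb hab hab' (fun h : y = b => hxc (h ▸ hab.symm.map_left))
      (fun h : y = b' => hxc (h ▸ hab'.symm.map_left)) rfl ha ha'
      (hab.act_old (hab.lift_over m) (mem_lift_b m) hxc fun h => hm.not_tree_diff h)
      (hab'.act_old (hab'.lift_over m') (mem_lift_b m') hxc fun h => hm'.not_tree_diff h)

end TypeAExt

/-! ### Exchanging the colors -/

namespace LinkConfig

/-- The configuration with the two checkerboard colors exchanged. -/
def dual (U : LinkConfig) : LinkConfig where
  C := U.C
  B := U.W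
  W := U.B
  Seg := U.Seg
  G := U.Gd
  Gd := U.G
  segFrom := U.segFrom
  segTo := U.segTo
  segBlack := U.segWhite
  segWhite := U.segBlack
  rot := U.rot
  s := U.s
  ord := U.ord
  ord_inj := U.ord_inj
  dual_trees := fun T => by rw [U.dual_trees, compl_compl]

lemma isPM_swap {U : LinkConfig} {m : U.C → U.W ⊕ U.B} (hm : U.dual.IsPM m) :
    U.IsPM fun x => (m x).swap := by
  obtain ⟨h1, h2, h3⟩ := hm
  refine ⟨fun x => ?_, fun x => ?_, fun R hR => ?_⟩
  · have h := h1 x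
    change U.Incid x (m x).swap
    revert h
    cases m x <;> exact id
  · have h := h2 x
    change U.NonRoot (m x).swap
    revert h
    cases m x <;> exact id
  · have hR' : U.dual.NonRoot R.swap := by
      revert hR
      cases R <;> exact id
    obtain ⟨x, hx, hu⟩ := h3 _ hR'
    refine ⟨x, ?_, fun y hy => hu y ?_⟩
    · simp only [hx, Sum.swap_swap]
    · rw [← hy, Sum.swap_swap]

lemma matchLetter_dual {U : LinkConfig} (m : U.C → U.W ⊕ U.B) (x : U.C) :
    U.dual.matchLetter m x = U.matchLetter (fun x => (m x).swap) x := by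
  have hT : U.dual.treeOf m = (U.treeOf fun x => (m x).swap)ᶜ := by
    ext y
    change (∃ b, m y = Sum.inl b) ↔ ¬ ∃ b, (m y).swap = Sum.inl b
    cases m y <;> simp
  unfold matchLetter
  rw [hT]
  generalize (U.treeOf fun x => (m x).swap) = T
  unfold dblLetter
  by_cases hx : x ∈ T
  · rw [if_pos hx]
    refine (if_neg (fun h : x ∈ Tᶜ => h hx)).trans ?_
    change (if U.G.InternallyActive U.ord Tᶜᶜ x then _ else _) = _
    rw [compl_compl]
  · rw [if_neg hx]
    exact if_pos (show x ∈ Tᶜ from hx)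

lemma EIconfig.dual {U : LinkConfig} (h : U.EIconfig) : U.dual.EIconfig := by
  intro x R _ _ m m' hm hm' hmx hmx'
  refine (matchLetter_dual (U := U) m x).trans (Eq.trans ?_ (matchLetter_dual (U := U) m' x).symm)
  have p := isPM_swap hm
  have q : (m x).swap = R.swap := by rw [hmx]
  have q' : (m' x).swap = R.swap := by rw [hmx']
  exact h x R.swap (q ▸ p.1 x) (q ▸ p.2.1 x) _ _ p (isPM_swap hm') q q'

end LinkConfig

/-- A white bigon becomes black when the colors are exchanged. -/
def TypeBExt.dual {U U' : LinkConfig} {c : U.C} (e : TypeBExt U U' c) :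
    TypeAExt U.dual U'.dual c where
  πC := e.πC
  c1 := e.c1
  c2 := e.c2
  c1_ne_c2 := e.c1_ne_c2
  πc1 := e.πc1
  πc2 := e.πc2
  π_surj := e.π_surj
  π_inj := e.π_inj
  fiber_c := e.fiber_c
  ιB := e.ιW
  ιB_inj := e.ιW_inj
  newB := e.newW
  newB_not := e.newW_not
  B_cover := e.W_cover
  ιW := e.ιB
  ιW_bij := e.ιB_bij
  rN := e.rE
  rS := e.rW
  rW := e.rN
  rE := e.rS
  ends_c := e.endsd_c.trans Sym2.eq_swap
  endsd_c := e.ends_c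
  ends_old := e.endsd_old
  endsd_old := e.ends_old
  ends_c1 := e.endsd_c1
  ends_c2 := e.endsd_c2
  endsd_c1 := e.ends_c1
  endsd_c2 := e.ends_c2
  ιS := e.ιS
  ιS_inj := e.ιS_inj
  t1 := e.t1
  t2 := e.t2
  t1_ne_t2 := e.t1_ne_t2
  t_new := e.t_new
  S_cover := e.S_cover
  seg_black1 := e.seg_white1
  seg_black2 := e.seg_white2
  seg_white1 := e.seg_black1
  seg_white2 := e.seg_black2
  seg_ends1 := e.seg_ends1
  seg_ends2 := e.seg_ends2
  seg_from_old := e.seg_from_old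
  seg_to_old := e.seg_to_old
  seg_black_old := e.seg_white_old
  seg_white_old := e.seg_black_old
  s_pres := e.s_pres
  ord_old := e.ord_old
  ord_new1 := e.ord_new1
  ord_new2 := e.ord_new2

/-- bigon reductions preserve the EI-property.
Let `U = L_{s;l}` be a link configuration containing a bigon whose two crossing
points carry consecutive labels, and let `U'' = L''_{s;l''}` be the link
configuration obtained by the bigon reduction at this bigon with the naturally
induced labeling.  (Equivalently: `U` is obtained from `U''` by a bigon
extension, of either type, with a natural relabeling — the relabeling
conditions encode exactly that the two bigon crossings of `U` carry consecutive
labels and that `l''` is induced by `l`.)  If `U` satisfies the EI-property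
then so does `U''`. -/
theorem statement13 (U'' U : LinkConfig) (c : U''.C)
    (ext : BigonExt U'' U c) (hEI : U.EIconfig) :
    U''.EIconfig := by
  rcases ext with e | e
  · exact e.eiConfig hEI
  · exact (e.dual.eiConfig hEI.dual).dual
end
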